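/- arXiv:1311.0577 — 4 statements merged into one kernel-verified Lean document; each statement's English description precedes it below -/
import Mathlib

section
/- The polynomial P = x^32 - 4x^31 - 155x^28 + 713x^27 - 2480x^26 + 9300x^25 - 5921x^24 + 24707x^23 + 127410x^22 - 646195x^21 + 747906x^20 - 7527575x^19 + 4369791x^18 - 28954961x^17 - 40645681x^16 + 66421685x^15 - 448568729x^14 + 751001257x^13 - 1820871490x^12 + 2531110165x^11 - 4120267319x^10 + 4554764528x^9 - 5462615927x^8 + 4607500922x^7 - 4062352344x^6 + 2380573824x^5 - 1492309000x^4 + 521018178x^3 - 201167463x^2 + 20505628x - 1261963 is irreducible over the rational numbers ℚ. -/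
open Polynomial

noncomputable def P : Polynomial ℚ :=
  X^32 - 4*X^31 - 155*X^28 + 713*X^27 - 2480*X^26 + 9300*X^25 - 5921*X^24 + 24707*X^23 + 127410*X^22 - 646195*X^21 + 747906*X^20 - 7527575*X^19 + 4369791*X^18 - 28954961*X^17 - 40645681*X^16 + 66421685*X^15 - 448568729*X^14 + 751001257*X^13 - 1820871490*X^12 + 2531110165*X^11 - 4120267319*X^10 + 4554764528*X^9 - 5462615927*X^8 + 4607500922*X^7 - 4062352344*X^6 + 2380573824*X^5 - 1492309000*X^4 + 521018178*X^3 - 201167463*X^2 + 20505628*X - 1261963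

noncomputable def PZ : Polynomial ℤ :=
  X^32 - 4*X^31 - 155*X^28 + 713*X^27 - 2480*X^26 + 9300*X^25 - 5921*X^24 + 24707*X^23 + 127410*X^22 - 646195*X^21 + 747906*X^20 - 7527575*X^19 + 4369791*X^18 - 28954961*X^17 - 40645681*X^16 + 66421685*X^15 - 448568729*X^14 + 751001257*X^13 - 1820871490*X^12 + 2531110165*X^11 - 4120267319*X^10 + 4554764528*X^9 - 5462615927*X^8 + 4607500922*X^7 - 4062352344*X^6 + 2380573824*X^5 - 1492309000*X^4 + 521018178*X^3 - 201167463*X^2 + 20505628*X - 1261963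

lemma PZ_map : PZ.map (algebraMap ℤ ℚ) = P := by
  simp [PZ, P]

lemma PZ_natDegree : PZ.natDegree = 32 := by
  unfold PZ; compute_degree!

lemma PZ_monic : PZ.Monic := by
  unfold PZ; monicity!

lemma PZ_mod : PZ.map (Int.castRingHom (ZMod 31)) = (X - C 4) ^ 32 := by
  have : Fact (Nat.Prime 31) := ⟨by norm_num⟩
  have h : (X - C 4 : (ZMod 31)[X]) ^ 31 = X ^ 31 - C 4 := by
    rw [sub_pow_char, ← C_pow, ZMod.pow_card]
  rw [pow_succ, h]
  have h4 : (C 4 : (ZMod 31)[X]) = 4 := rfl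
  rw [h4]
  simp only [PZ, Polynomial.map_sub, Polynomial.map_add, Polynomial.map_mul, Polynomial.map_pow,
    Polynomial.map_X, Polynomial.map_ofNat]
  ring_nf
  reduce_mod_char
  ring_nf
  reduce_mod_char

lemma PZ_no_root (r : ℤ) : PZ.eval r ≠ 0 := by
  intro h
  have h3 : ((PZ.eval r : ℤ) : ZMod 3) = 0 := by rw [h]; simp
  simp only [PZ, eval_sub, eval_add, eval_mul, eval_pow, eval_X, eval_ofNat] at h3
  push_cast at h3
  generalize (r : ZMod 3) = t at h3
  revert t
  decide

lemma PZ_der : ((PZ.derivative.eval 4 : ℤ)) % 961 ≠ 0 := by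
  simp [PZ]

lemma factor_aux (A B : ℤ[X]) (hA : A.Monic) (hAB : A * B = PZ) (hd : 2 ≤ A.natDegree) :
    (31 : ℤ) ∣ A.eval 4 ∧ (31 : ℤ) ∣ A.derivative.eval 4 := by
  have : Fact (Nat.Prime 31) := ⟨by norm_num⟩
  set φ := Int.castRingHom (ZMod 31)
  have hdvd : A.map φ ∣ (X - C 4) ^ 32 := by
    rw [← PZ_mod, ← hAB, Polynomial.map_mul]
    exact dvd_mul_right _ _
  obtain ⟨i, -, hi⟩ := (dvd_prime_pow (prime_X_sub_C (4 : ZMod 31)) 32).1 hdvd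
  have hdeg : i = A.natDegree := by
    have h1 := natDegree_eq_of_degree_eq (degree_eq_degree_of_associated hi)
    rw [hA.natDegree_map, natDegree_pow, natDegree_X_sub_C, mul_one] at h1
    exact h1.symm
  obtain ⟨D, hD⟩ : (X - C (4 : ZMod 31)) ^ 2 ∣ A.map φ :=
    (pow_dvd_pow _ (by omega)).trans hi.symm.dvd
  have e1 : (A.map φ).eval 4 = 0 := by rw [hD]; simp
  have e2 : (A.map φ).derivative.eval 4 = 0 := by rw [hD]; simp [derivative_mul, derivative_pow]
  have key : ∀ F : ℤ[X], (F.map φ).eval 4 = ((F.eval 4 : ℤ) : ZMod 31) := by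
    intro F
    have := eval_map_apply (p := F) φ 4
    simpa [φ] using this
  rw [derivative_map, key] at e2
  rw [key] at e1
  exact ⟨(ZMod.intCast_zmod_eq_zero_iff_dvd _ 31).1 e1, (ZMod.intCast_zmod_eq_zero_iff_dvd _ 31).1 e2⟩

lemma no_linear (A B : ℤ[X]) (hA : A.Monic) (hAB : A * B = PZ) : A.natDegree ≠ 1 := by
  intro h
  have := hA.eq_X_add_C h
  apply PZ_no_root (-A.coeff 0)
  rw [← hAB, eval_mul, this]
  simp

lemma PZ_irreducible : Irreducible PZ := by
  rw [PZ_monic.irreducible_iff_natDegree]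
  refine ⟨fun h => ?_, fun f g hf hg h => ?_⟩
  · have := PZ_natDegree
    rw [h] at this
    simp at this
  · by_contra hc
    push Not at hc
    have hgf : g * f = PZ := by rw [mul_comm]; exact h
    have f1 := no_linear f g hf h
    have g1 := no_linear g f hg hgf
    obtain ⟨⟨a, ha⟩, ⟨b, hb⟩⟩ := factor_aux f g hf h (by omega)
    obtain ⟨⟨c, hc⟩, ⟨d, hd⟩⟩ := factor_aux g f hg hgf (by omega)
    apply PZ_der
    rw [← h, derivative_mul, eval_add, eval_mul, eval_mul, ha, hb, hc, hd]
    apply Int.emod_eq_zero_of_dvd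
    exact ⟨b * c + a * d, by ring⟩

theorem irreducible_P : Irreducible P := by
  rw [← PZ_map]
  exact (PZ_monic.irreducible_iff_irreducible_map_fraction_map).1 PZ_irreducible
end

section
/- Let P = x^32 - 4x^31 - 155x^28 + 713x^27 - 2480x^26 + 9300x^25 - 5921x^24 + 24707x^23 + 127410x^22 - 646195x^21 + 747906x^20 - 7527575x^19 + 4369791x^18 - 28954961x^17 - 40645681x^16 + 66421685x^15 - 448568729x^14 + 751001257x^13 - 1820871490x^12 + 2531110165x^11 - 4120267319x^10 + 4554764528x^9 - 5462615927x^8 + 4607500922x^7 - 4062352344x^6 + 2380573824x^5 - 1492309000x^4 + 521018178x^3 - 201167463x^2 + 20505628x - 1261963 ∈ ℚ[x], which is irreducible, and let K = ℚ[x]/(P) be the number field it defines. The discriminant of K over ℚ equals -31^41. -/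
open Polynomial

namespace DP

/-! ### determinants by elimination -/

def subL (q : ℚ) : List ℚ → List ℚ → List ℚ
  | [], ys => ys.map (fun y => - (q * y))
  | x :: xs, [] => x :: xs
  | x :: xs, y :: ys => (x - q * y) :: subL q xs ys

def detL : ℕ → List (List ℚ) → ℚ
  | 0, _ => 1
  | n+1, L =>
    let r := L.headD []
    let a := r.headD 0
    a * detL n (L.tail.map fun row => subL (row.headD 0 / a) row.tail r.tail)

def toM (n : ℕ) (L : List (List ℚ)) : Matrix (Fin n) (Fin n) ℚ :=
  fun i j => (L.getD i []).getD j 0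

lemma subL_getD (q : ℚ) : ∀ (xs ys : List ℚ) (j : ℕ),
    (subL q xs ys).getD j 0 = xs.getD j 0 - q * ys.getD j 0
  | [], ys, j => by
    simp only [subL, List.getD_eq_getElem?_getD, List.getElem?_map, List.getElem?_nil]
    cases ys[j]? <;> simp
  | x :: xs, [], j => by simp [subL]
  | x :: xs, y :: ys, 0 => by simp [subL]
  | x :: xs, y :: ys, j+1 => by
    have := subL_getD q xs ys j
    simpa [subL] using this

lemma det_schur (n : ℕ) (M : Matrix (Fin (n+1)) (Fin (n+1)) ℚ) (h : M 0 0 ≠ 0) :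
    M.det = M 0 0 * Matrix.det (Matrix.of fun i j : Fin n =>
      M i.succ j.succ - M i.succ 0 / M 0 0 * M 0 j.succ) := by
  have h1 : M.det = (Matrix.of fun i j : Fin (n+1) =>
      if i = 0 then M 0 j else M i j - M i 0 / M 0 0 * M 0 j).det := by
    refine Matrix.det_eq_of_forall_row_eq_smul_add_const
      (fun i => if i = 0 then 0 else M i 0 / M 0 0) 0 (by simp) ?_
    intro i j
    by_cases hi : i = 0
    · simp [hi]
    · simp [hi]
  rw [h1, Matrix.det_succ_column_zero, Fin.sum_univ_succ]
  rw [Finset.sum_eq_zero]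
  · simp [Matrix.submatrix, Fin.succ_ne_zero]
  · intro i _
    simp [Fin.succ_ne_zero, h]

lemma detL_correct : ∀ (n : ℕ) (L : List (List ℚ)), detL n L ≠ 0 → (toM n L).det = detL n L
  | 0, L, _ => by simp [detL]
  | n+1, L, h => by
    simp only [detL] at h ⊢
    have h0 : (toM (n+1) L) 0 0 = (L.headD []).headD 0 := by
      unfold toM
      rcases L with _ | ⟨r, L⟩
      · simp
      · rcases r with _ | ⟨a, r⟩ <;> simp
    have ha : (L.headD []).headD 0 ≠ 0 := left_ne_zero_of_mul h
    rw [det_schur _ _ (h0 ▸ ha), h0, ← detL_correct n _ (right_ne_zero_of_mul h)]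
    congr 2
    ext i j
    simp only [toM, Matrix.of_apply]
    have e1 : ∀ (l : List ℚ), l.getD ((0 : Fin (n+1)) : ℕ) 0 = l.headD 0 := by
      intro l; cases l <;> simp
    have e2 : ∀ (l : List ℚ) (j : ℕ), l.getD (j+1) 0 = l.tail.getD j 0 := by
      intro l j; cases l <;> simp
    have e3 : L.getD ((0 : Fin (n+1)) : ℕ) [] = L.headD [] := by
      cases L <;> simp
    have e4 : ∀ (i : ℕ), L.getD (i+1) [] = L.tail.getD i [] := by
      intro j; cases L <;> simp
    simp only [Fin.val_succ, e1, e2, e3, e4]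
    have e5 : ∀ (T : List (List ℚ)) (g : List ℚ → List ℚ) (i : ℕ), i < T.length →
      (T.map g).getD i [] = g (T.getD i []) := by
      intro T g i hi
      simp [hi]
    by_cases hi : (i : ℕ) < L.tail.length
    · rw [e5 _ _ _ hi, subL_getD]
    · have : L.tail.getD i [] = [] := by
        rw [List.getD_eq_default]; omega
      rw [this, List.getD_eq_default (l := List.map _ _)]
      · simp
      · simp at hi ⊢; omega

/-! ### concrete data -/

def PL : List ℤ := [-1261963, 20505628, -201167463, 521018178, -1492309000, 2380573824, -4062352344, 4607500922, -5462615927, 4554764528, -4120267319, 2531110165, -1820871490, 751001257, -448568729, 66421685, -40645681, -28954961, 4369791, -7527575, 747906, -646195, 127410, 24707, -5921, 9300, -2480, 713, -155, 0, 0, -4]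
def dL : List ℤ := (List.range 32 : List ℕ).map fun i : ℕ =>
  ((i+1 : ℕ) : ℤ) * (PL ++ [1]).getD (i+1 : ℕ) 0
def mulX (l : List ℤ) : List ℤ :=
  let t := l.getLastD 0
  List.zipWith (fun a b => a - t * b) (0 :: l.dropLast) PL
def rows : ℕ → List ℤ → List (List ℤ)
  | 0, _ => []
  | n+1, l => l :: rows n (mulX l)

def f' : ℤ := 122377706107780110832102018666640596592855297820089939641928042987535578955346930335789419745899037093846010523209818440249649569194789681234629196769439050499979550486
def f : ℤ := 31 * f'
def c : ℤ := -411179142400667996929631127860672413933148185231290620763859399321285277694002858820297190556325534226772377963939095903530650366356533570190491460211702159502299251639711313475041908390356738245279694249367967950946994155641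

def hor (l : List ℤ) (x : ℤ) : ℤ := l.foldr (fun a b => a + x * b) 0

def a0 : ℤ := hor (PL ++ [1]) c
def a1 : ℤ := hor dL c
def s0 : ℤ := a0 / (f ^ 2 * 31 ^ 38)
def t : ℤ := a1 / f

lemma a0_eq : a0 = f ^ 2 * (31 ^ 38 * s0) := by decide +kernel
lemma a1_eq : a1 = f * t := by decide +kernel
lemma s0_mod : ¬ (31 : ℤ) ∣ s0 := by decide +kernel
lemma t_mod : ¬ (31 : ℤ) ∣ t := by decide +kernel
lemma f_mod : ¬ (31 : ℤ) ∣ f' := by decide +kernel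

lemma det_rows : detL 32 ((rows 32 dL).map (·.map (fun x : ℤ => (x : ℚ)))) =
    -31 ^ 41 * (f : ℚ) ^ 2 := by decide +kernel

end DP

open Polynomial
namespace DP

lemma cop {A : Type*} [CommRing A] {n : ℤ} (h : ¬ (31 : ℤ) ∣ n) : IsCoprime (n : A) (31 : A) := by
  have hp : Prime (31 : ℤ) := Int.prime_iff_natAbs_prime.2 (by norm_num)
  have : IsCoprime (31 : ℤ) n := (Prime.coprime_iff_not_dvd hp).2 h
  simpa using (this.symm.map (Int.castRingHom A))

/-- The abstract situation. -/
structure Sit (A : Type*) [CommRing A] (N : A →* ℤ) (p b h H : A) : Prop where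
  h1 : (f : A) * b = f * t + p * h
  hh : h = p ^ 30 + 31 * H
  h2 : p * b = - ((f : A) * (31 ^ 38 * s0))
  h3 : b * (b - t) = - ((31 ^ 38 * s0) * h)
  hN : N p = f ^ 2 * (31 ^ 38 * s0)
  hNi : ∀ n : ℤ, N (n : A) = n ^ 32

set_option linter.unusedSectionVars false
variable {A : Type*} [CommRing A] [IsDomain A] [CharZero A] {N : A →* ℤ} {p b h H : A}

lemma p31 : Prime (31 : ℤ) := Int.prime_iff_natAbs_prime.2 (by norm_num)

lemma Sit.L2 (S : Sit A N p b h H) : ¬ (31 : A) ∣ b := by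
  rintro ⟨d, hd⟩
  have hc : IsCoprime (31 ^ 38 : A) (b - t) := by
    apply IsCoprime.pow_left
    have := (cop (A := A) t_mod).symm.neg_right
    rw [hd, sub_eq_neg_add]
    exact this.add_mul_left_right _
  have hdv : (31 ^ 38 : A) ∣ b := by
    apply hc.dvd_of_dvd_mul_right
    rw [S.h3]
    exact ⟨-(s0 * h), by ring⟩
  obtain ⟨e, he⟩ := hdv
  have h4 : p * e = ((-(f * s0) : ℤ) : A) := by
    have h31 : (31 ^ 38 : A) ≠ 0 := by norm_num
    apply mul_left_cancel₀ h31
    have := S.h2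
    rw [he] at this
    push_cast
    linear_combination this
  have h5 := congrArg N h4
  rw [map_mul, S.hN, S.hNi] at h5
  have h6 : (31 : ℤ) ^ 32 * (f' ^ 2 * 31 ^ 8 * s0 * N e) = 31 ^ 32 * (f' * s0) ^ 32 := by
    have hf : f = 31 * f' := rfl
    rw [hf] at h5
    linear_combination h5
  have h7 := mul_left_cancel₀ (by norm_num) h6
  have h8 : (31 : ℤ) ∣ (f' * s0) ^ 32 := ⟨f' ^ 2 * 31 ^ 7 * s0 * N e, by rw [← h7]; ring⟩
  rcases p31.dvd_or_dvd (p31.dvd_of_dvd_pow h8) with h | h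
  · exact f_mod h
  · exact s0_mod h

lemma Sit.L1 (S : Sit A N p b h H) : ¬ (31 : A) ∣ b - t := by
  rintro ⟨d, hd⟩
  have hc : IsCoprime (31 ^ 39 : A) b := by
    apply IsCoprime.pow_left
    have := (cop (A := A) t_mod).symm
    rw [show b = t + 31 * d by linear_combination hd]
    exact this.add_mul_left_right _
  have hdv : (31 ^ 39 : A) ∣ p := by
    apply hc.dvd_of_dvd_mul_right
    rw [S.h2, show f = 31 * f' from rfl]
    exact ⟨-(s0 * f'), by push_cast; ring⟩
  obtain ⟨e, he⟩ := hdv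
  have h5 := congrArg N he
  rw [map_mul, S.hN, show (31 ^ 39 : A) = ((31 ^ 39 : ℤ) : A) by norm_num, S.hNi] at h5
  have h6 : (31 : ℤ) ^ 40 * (f' ^ 2 * s0) = 31 ^ 40 * (31 * (31 ^ 1207 * N e)) := by
    have hf : f = 31 * f' := rfl
    rw [hf] at h5
    rw [show (31 ^ 39 : ℤ) ^ 32 = 31 ^ 40 * (31 * 31 ^ 1207) by rw [← pow_mul, ← pow_succ', ← pow_add]] at h5
    linear_combination h5
  have h7 := mul_left_cancel₀ (by positivity) h6
  have h8 : (31 : ℤ) ∣ f' ^ 2 * s0 := ⟨_, h7⟩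
  rcases p31.dvd_or_dvd h8 with h | h
  · exact f_mod (p31.dvd_of_dvd_pow h)
  · exact s0_mod h

/-- `π ^ 31` is divisible by 31. -/
lemma Sit.p31 (S : Sit A N p b h H) : p ^ 31 = 31 * (f' * (b - t) - p * H) := by
  have h1 := S.h1
  rw [S.hh, show f = 31 * f' from rfl] at h1
  push_cast at h1
  linear_combination -h1

lemma Sit.pb (S : Sit A N p b h H) : p * b = 31 * (31 * -((f' : A) * (31 ^ 37 * s0))) := by
  rw [S.h2, show f = 31 * f' from rfl]
  push_cast; ring

lemma Sit.key (S : Sit A N p b h H) (u v : ℤ) (huv : (31 : A) ∣ u * p ^ 30 + v * b) :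
    (31 : ℤ) ∣ u := by
  by_contra hu
  obtain ⟨g, hg⟩ := huv
  have h31 : (31 : A) ≠ 0 := by norm_num
  have e1 : (u : A) * (f' * (b - t) - p * H) + v * (31 * -((f' : A) * (31 ^ 37 * s0))) = p * g := by
    apply mul_left_cancel₀ h31
    linear_combination p * hg - u * S.p31 - v * S.pb
  obtain ⟨x, y, hxy⟩ : IsCoprime ((u * f' : ℤ) : A) 31 := by
    apply cop
    intro hd
    rcases DP.p31.dvd_or_dvd hd with h | h
    · exact hu h
    · exact f_mod h
  push_cast at hxy
  have e2 : ∃ X Y, b - t = p * X + 31 * Y := by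
    refine ⟨x * (g + u * H), y * (b - t) + x * v * ((f' : A) * (31 ^ 37 * s0)), ?_⟩
    linear_combination (-(b - t)) * hxy + x * e1
  obtain ⟨X, Y, e2⟩ := e2
  have e3 : (31 : A) ∣ (b - t) ^ 32 := by
    have : (p * X + 31 * Y) - p * X ∣ (p * X + 31 * Y) ^ 32 - (p * X) ^ 32 := sub_dvd_pow_sub_pow _ _ _
    rw [← e2] at this
    have h' : (31 : A) ∣ (b - t) ^ 32 - (p * X) ^ 32 := by
      refine dvd_trans ⟨Y, ?_⟩ this
      rw [e2]; ring
    have h'' : (31 : A) ∣ (p * X) ^ 32 := by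
      rw [mul_pow, pow_succ p, S.p31]
      exact ⟨(f' * (b - t) - p * H) * p * X ^ 32, by ring⟩
    simpa using dvd_add h' h''
  have e4 : (31 : A) ∣ (b - t) * b := by
    rw [mul_comm, S.h3]
    exact ⟨-(31 ^ 37 * s0 * h), by ring⟩
  have e5 : b ∣ (b - t) ^ 31 + (t : A) ^ 31 := by
    have := Odd.add_dvd_pow_add_pow (b - t) (t : A) (n := 31) (by decide)
    simpa using this
  have e6 : (31 : A) ∣ (b - t) * ((b - t) ^ 31 + (t : A) ^ 31) :=
    e4.trans (mul_dvd_mul_left _ e5)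
  have e7 : (31 : A) ∣ (b - t) * (t : A) ^ 31 := by
    have := dvd_sub e6 e3
    rwa [show (b - t) * ((b - t) ^ 31 + (t : A) ^ 31) - (b - t) ^ 32 = (b - t) * (t : A) ^ 31 by ring]
      at this
  exact S.L1 (((cop (A := A) t_mod).symm.pow_right (n := 31)).dvd_of_dvd_mul_right e7)

lemma Sit.fin (S : Sit A N p b h H) (v : Fin 31 → ℤ) (w : ℤ)
    (hv : (31 : A) ∣ ∑ i, (v i : A) * p ^ (i : ℕ) + w * b) : (∀ i, (31 : ℤ) ∣ v i) ∧ (31 : ℤ) ∣ w := by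
  have hcast : ∀ n : ℤ, (31 : ℤ) ∣ n → (31 : A) ∣ n := by
    rintro n ⟨k, rfl⟩; exact ⟨k, by push_cast; ring⟩
  have hp31 : (31 : A) ∣ p ^ 31 := ⟨_, S.p31⟩
  have hpb : (31 : A) ∣ p * b := ⟨_, S.pb⟩
  have hall : ∀ (n : ℕ) (hn : n < 31), (31 : ℤ) ∣ v ⟨n, hn⟩ := by
    intro n
    induction n using Nat.strong_induction_on with
    | _ n ih =>
      intro hn
      have h1 : (31 : A) ∣ (∑ i, (v i : A) * p ^ (i : ℕ) + w * b) * p ^ (30 - n) := hv.mul_right _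
      rw [add_mul, Finset.sum_mul, ← Finset.add_sum_erase _ _ (Finset.mem_univ (⟨n, hn⟩ : Fin 31))] at h1
      have h2 : (31 : A) ∣ ∑ i ∈ Finset.univ.erase (⟨n, hn⟩ : Fin 31), (v i : A) * p ^ (i : ℕ) * p ^ (30 - n) := by
        apply Finset.dvd_sum
        intro i hi
        have hne : (i : ℕ) ≠ n := by
          intro h
          simp at hi
          exact hi (Fin.ext h)
        rcases lt_or_gt_of_ne hne with h | h
        · rw [mul_assoc]
          exact (hcast _ (ih i h i.2)).mul_right _
        · rw [mul_assoc, ← pow_add]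
          refine Dvd.dvd.mul_left (hp31.trans (pow_dvd_pow _ ?_)) _
          omega
      have h3 : (v ⟨n, hn⟩ : A) * p ^ n * p ^ (30 - n) = v ⟨n, hn⟩ * p ^ 30 := by
        rw [mul_assoc, ← pow_add]; congr 2; omega
      have h4 : (31 : A) ∣ v ⟨n, hn⟩ * p ^ 30 + w * b * p ^ (30 - n) := by
        have := dvd_sub h1 h2
        simp only [h3] at this
        convert this using 1
        ring
      by_cases hn30 : n = 30
      · subst hn30
        simp only [Nat.sub_self, pow_zero, mul_one] at h4
        exact S.key _ _ h4
      · apply S.key _ 0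
        have h5 : (31 : A) ∣ w * b * p ^ (30 - n) := by
          rw [show 30 - n = (29 - n) + 1 by omega, pow_succ]
          rw [show (w : A) * b * (p ^ (29 - n) * p) = (p * b) * (w * p ^ (29 - n)) by ring]
          exact hpb.mul_right _
        have := dvd_sub h4 h5
        simpa using this
  refine ⟨fun i => hall i i.2, ?_⟩
  by_contra hw
  have h1 : (31 : A) ∣ ∑ i, (v i : A) * p ^ (i : ℕ) :=
    Finset.dvd_sum fun i _ => (hcast _ (hall i i.2)).mul_right _
  have h2 : (31 : A) ∣ w * b := by simpa using dvd_sub hv h1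
  exact S.L2 ((cop (A := A) hw).symm.dvd_of_dvd_mul_left h2)
end DP

open Polynomial
namespace DP

noncomputable def ofL (l : List ℤ) : ℤ[X] := l.foldr (fun a p => C a + X * p) 0

noncomputable def PZ : ℤ[X] := ofL (PL ++ [1])

lemma ofL_cons (a : ℤ) (l : List ℤ) : ofL (a :: l) = C a + X * ofL l := rfl
lemma ofL_nil : ofL [] = 0 := rfl

lemma ofL_eval (l : List ℤ) (x : ℤ) : (ofL l).eval x = hor l x := by
  induction l with
  | nil => simp [ofL, hor]
  | cons a l ih => rw [ofL_cons]; simp [ih, hor]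

lemma ofL_coeff (l : List ℤ) (n : ℕ) : (ofL l).coeff n = l.getD n 0 := by
  induction l generalizing n with
  | nil => simp [ofL]
  | cons a l ih =>
    rw [ofL_cons]
    cases n with
    | zero => simp
    | succ n => rw [coeff_add, coeff_X_mul, ih, coeff_C]; simp

lemma PZ_map : PZ.map (Int.castRingHom ℚ) = P := by
  simp only [PZ, PL, List.cons_append, List.nil_append, ofL_cons, ofL_nil, P, Polynomial.map_add, Polynomial.map_mul, map_X, Polynomial.map_zero,
    Polynomial.map_neg, Polynomial.map_ofNat, Polynomial.map_one, map_neg, map_ofNat, map_one, map_zero]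
  ring

lemma PZ_deriv : derivative PZ = ofL dL := by
  ext n
  rw [coeff_derivative, PZ, ofL_coeff, ofL_coeff, dL]
  by_cases hn : n < 32
  · simp [hn, mul_comm]
  · rw [List.getD_eq_default, List.getD_eq_default]
    · simp
    · simp; omega
    · simp [PL]; omega

instance : Fact (Nat.Prime 31) := ⟨by norm_num⟩

lemma PZ_mod : PZ.map (Int.castRingHom (ZMod 31)) = (X - C (c : ZMod 31)) ^ 32 := by
  have hc : (c : ZMod 31) = 4 := by decide +kernel
  have h4 : (C (4 : ZMod 31)) ^ 31 = C 4 := by rw [← C_pow]; congr 1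
  have h1 : (X - C (c : ZMod 31)) ^ 32 = (X ^ 31 - C 4) * (X - C 4) := by
    rw [hc, pow_succ, sub_pow_char, h4]
  rw [h1]
  have h2 : ((X : (ZMod 31)[X]) ^ 31 - C 4) * (X - C 4) = (ofL (16 :: -4 :: (List.replicate 29 0 ++ [-4, 1]))).map (Int.castRingHom (ZMod 31)) := by
    simp [ofL_cons, ofL_nil, List.replicate]
    rw [show (C (4 : ZMod 31)) = 4 from rfl]
    ring
  rw [h2]
  ext n
  rw [coeff_map, coeff_map, PZ, ofL_coeff, ofL_coeff]
  by_cases hn : n < 33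
  · have : ∀ n < 33, (((PL ++ [1]).getD n 0 : ℤ) : ZMod 31) = ((16 :: -4 :: (List.replicate 29 0 ++ [-4, 1]) : List ℤ).getD n 0 : ℤ) := by
      decide +kernel
    exact this n hn
  · rw [List.getD_eq_default, List.getD_eq_default]
    · simp; omega
    · simp [PL]; omega

lemma decomp : ∃ h H : ℤ[X], PZ = C a0 + C a1 * (X - C c) + (X - C c) ^ 2 * h ∧
    h = (X - C c) ^ 30 + 31 * H := by
  obtain ⟨g, hg⟩ := X_sub_C_dvd_sub_C_eval (p := PZ) (a := c)
  obtain ⟨h, hh⟩ := X_sub_C_dvd_sub_C_eval (p := g) (a := c)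
  have e0 : PZ.eval c = a0 := ofL_eval _ _
  have e1 : g.eval c = a1 := by
    have : (derivative PZ).eval c = a1 := by rw [PZ_deriv]; exact ofL_eval _ _
    rw [show PZ = C (PZ.eval c) + (X - C c) * g by rw [← hg]; ring] at this
    simpa using this
  rw [e0] at hg
  rw [e1] at hh
  have hP : PZ = C a0 + C a1 * (X - C c) + (X - C c) ^ 2 * h := by
    linear_combination hg + (X - C c) * hh
  have hm : h.map (Int.castRingHom (ZMod 31)) = (X - C (c : ZMod 31)) ^ 30 := by
    have h1 := congrArg (Polynomial.map (Int.castRingHom (ZMod 31))) hP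
    rw [PZ_mod] at h1
    have ha0 : (a0 : ZMod 31) = 0 := 
      (ZMod.intCast_zmod_eq_zero_iff_dvd _ 31).2 ⟨f ^ 2 * (31 ^ 37 * s0), by rw [a0_eq]; push_cast; ring⟩
    have ha1 : (a1 : ZMod 31) = 0 := 
      (ZMod.intCast_zmod_eq_zero_iff_dvd _ 31).2 ⟨f' * t, by rw [a1_eq, f]; push_cast; ring⟩
    simp only [Polynomial.map_add, Polynomial.map_mul, Polynomial.map_pow, Polynomial.map_sub, map_X, map_C, Int.coe_castRingHom, ha0, ha1, map_zero, zero_mul, zero_add] at h1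
    have hne : (X - C (c : ZMod 31)) ^ 2 ≠ 0 := pow_ne_zero _ (X_sub_C_ne_zero _)
    apply mul_left_cancel₀ hne
    rw [← h1]; ring
  have hd : C (31 : ℤ) ∣ h - (X - C c) ^ 30 := by
    rw [C_dvd_iff_dvd_coeff]
    intro i
    have h2 : (h - (X - C c) ^ 30).map (Int.castRingHom (ZMod 31)) = 0 := by
      simp [hm]
    have h3 := congrArg (fun q => q.coeff i) h2
    simp only [coeff_map, coeff_zero] at h3
    exact (ZMod.intCast_zmod_eq_zero_iff_dvd _ 31).1 h3
  obtain ⟨H, hH⟩ := hd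
  refine ⟨h, H, hP, ?_⟩
  have : (C (31 : ℤ)) = 31 := rfl
  rw [this] at hH
  linear_combination hH
end DP

open Polynomial
namespace DP

lemma ofL_snoc (u : List ℤ) (x : ℤ) : ofL (u ++ [x]) = ofL u + X ^ u.length * C x := by
  induction u with
  | nil => simp [ofL_cons, ofL_nil]
  | cons a u ih => rw [List.cons_append, ofL_cons, ih, ofL_cons, List.length_cons]; ring

lemma ofL_zip (q : ℤ) : ∀ (u v : List ℤ), u.length = v.length →
    ofL (List.zipWith (fun a b => a - q * b) u v) = ofL u - C q * ofL v
  | [], [], _ => by simp [ofL_nil]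
  | a :: u, b :: v, h => by
    rw [List.zipWith_cons_cons, ofL_cons, ofL_cons, ofL_cons, ofL_zip q u v (by simpa using h)]
    simp only [C_sub, C_mul]
    ring
  | [], _ :: _, h => by simp at h
  | _ :: _, [], h => by simp at h

lemma PL_len : PL.length = 32 := rfl

lemma mulX_len (l : List ℤ) (h : l.length = 32) : (mulX l).length = 32 := by
  simp [mulX, PL_len, h]

lemma ofL_mulX (l : List ℤ) (h : l.length = 32) :
    ofL (mulX l) = X * ofL l - C (l.getLastD 0) * PZ := by
  have hne : l ≠ [] := by rintro rfl; simp at h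
  have h1 : l = l.dropLast ++ [l.getLastD 0] := by
    rw [List.getLastD_eq_getLast?, List.getLast?_eq_some_getLast hne]
    exact (List.dropLast_append_getLast hne).symm
  have h2 : ofL l = ofL l.dropLast + X ^ 31 * C (l.getLastD 0) := by
    conv_lhs => rw [h1]
    rw [ofL_snoc, List.length_dropLast, h]
  rw [mulX, ofL_zip _ _ _ (by simp [PL_len, h]), ofL_cons, PZ, ofL_snoc, PL_len, h2]
  simp
  ring

lemma rows_getD : ∀ (n : ℕ) (l : List ℤ) (j : ℕ), j < n → (rows n l).getD j [] = mulX^[j] l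
  | n+1, l, 0, _ => by simp [rows]
  | n+1, l, j+1, h => by
    rw [rows, List.getD_cons_succ, rows_getD n _ j (by omega)]
    rfl

lemma rows_length : ∀ (n : ℕ) (l : List ℤ), (rows n l).length = n
  | 0, _ => rfl
  | n+1, l => by simp [rows, rows_length n]

lemma iter_len (j : ℕ) : (mulX^[j] dL).length = 32 := by
  induction j with
  | zero => rfl
  | succ j ih => rw [Function.iterate_succ_apply']; exact mulX_len _ ih

section
variable {K : Type*} [Field K]

lemma aeval_iter (α : K) (hα : aeval α PZ = 0) (j : ℕ) : aeval α (ofL (mulX^[j] dL)) = aeval α (derivative PZ) * α ^ j := by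
  induction j with
  | zero => simp [PZ_deriv]
  | succ j ih =>
    rw [Function.iterate_succ_apply', ofL_mulX _ (iter_len j), map_sub, map_mul, map_mul, ih, hα, aeval_X]
    ring

lemma aeval_ofL [Algebra ℚ K] (α : K) (l : List ℤ) (h : l.length = 32) :
    aeval α (ofL l) = ∑ i : Fin 32, ((l.getD i 0 : ℤ) : ℚ) • α ^ (i : ℕ) := by
  have hd : (ofL l).natDegree < 32 := by
    apply Nat.lt_succ_of_le
    rw [natDegree_le_iff_coeff_eq_zero]
    intro n hn
    rw [ofL_coeff, List.getD_eq_default]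
    omega
  rw [aeval_eq_sum_range' hd, Finset.sum_range]
  refine Finset.sum_congr rfl fun i _ => ?_
  rw [ofL_coeff, Int.cast_smul_eq_zsmul]

lemma norm_deriv [Algebra ℚ K] (α : K) (hα : aeval α PZ = 0) (b : Module.Basis (Fin 32) ℚ K) (hb : ∀ i, b i = α ^ (i : ℕ)) :
    Algebra.norm ℚ (aeval α (derivative PZ)) = -31 ^ 41 * (f : ℚ) ^ 2 := by
  rw [Algebra.norm_eq_matrix_det b, ← det_rows, ← detL_correct, ← Matrix.det_transpose]
  · congr 1
    ext i j
    rw [Matrix.transpose_apply, Algebra.leftMulMatrix_eq_repr_mul, hb, ← aeval_iter α hα,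
      aeval_ofL α _ (iter_len _)]
    simp_rw [← hb]
    rw [Module.Basis.repr_sum_self]
    have hi : (i : ℕ) < (rows 32 dL).length := by rw [rows_length]; exact i.2
    have h2 := rows_getD 32 dL i i.2
    have hj : (j : ℕ) < (mulX^[i] dL).length := by rw [iter_len]; exact j.2
    rw [toM]
    have e5 : ∀ {β γ : Type} (T : List β) (g : β → γ) (x : β) (y : γ) (i : ℕ), i < T.length →
      (T.map g).getD i y = g (T.getD i x) := by
      intro _ _ T g x y i hi
      simp [hi]
    rw [e5 _ _ [] _ _ hi, h2, e5 _ _ 0 _ _ hj]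
  · rw [det_rows]
    have : (f : ℚ) ≠ 0 := by
      have : f ≠ 0 := by decide +kernel
      exact_mod_cast this
    positivity
end

end DP

open Polynomial
namespace DP
open NumberField

lemma P_monic_of {K : Type*} [Field K] [NumberField K] (pb : PowerBasis ℚ K)
    (hmin : minpoly ℚ pb.gen = P) : PZ.Monic := by
  have h : P.Monic := hmin ▸ minpoly.monic (Algebra.IsIntegral.isIntegral _)
  rw [← PZ_map] at h
  exact monic_of_injective (RingHom.injective_int _) h

theorem sit_exists {K : Type*} [Field K] [NumberField K] (pb : PowerBasis ℚ K)
    (hdim : pb.dim = 32) (hmin : minpoly ℚ pb.gen = P) :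
    ∃ (p b h H : 𝓞 K), Sit (𝓞 K) (Algebra.norm ℤ) p b h H ∧ (p : K) = pb.gen - (c : K) ∧
      ∃ g : ℚ[X], g.natDegree = 31 ∧ g.Monic ∧ (b : K) = aeval pb.gen (C (1 / (f : ℚ)) * g) := by
  have hα : aeval pb.gen PZ = 0 := by
    have := minpoly.aeval ℚ pb.gen
    rw [hmin, ← PZ_map] at this
    rwa [← algebraMap_int_eq, aeval_map_algebraMap] at this
  have hmon := P_monic_of pb hmin
  have hdeg : PZ.natDegree = 32 := by
    rw [← hdim, ← PowerBasis.natDegree_minpoly pb, hmin, ← PZ_map,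
      natDegree_map_eq_of_injective (RingHom.injective_int _)]
  have hint : IsIntegral ℤ pb.gen := ⟨PZ, hmon, by simpa [aeval_def] using hα⟩
  let a : 𝓞 K := ⟨pb.gen, hint⟩
  have ha : (a : K) = pb.gen := rfl
  have hαA : aeval a PZ = 0 := by
    apply RingOfIntegers.coe_injective
    have := aeval_algebraMap_apply K a PZ
    rw [map_zero, ← this]
    exact hα
  obtain ⟨h, H, hP, hH⟩ := decomp
  have hfK : (f : K) ≠ 0 := by
    have : f ≠ 0 := by decide +kernel
    exact_mod_cast this
  set p : 𝓞 K := a - c with hp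
  set hA : 𝓞 K := aeval a h with hhA
  have r1 : (0 : 𝓞 K) = a0 + a1 * p + p ^ 2 * hA := by
    rw [← hαA, hP]
    simp [hp, hhA]
  have r2 : hA = p ^ 30 + 31 * aeval a H := by
    rw [hhA, hH, map_add, map_mul, map_pow, map_ofNat]; simp [hp]
  let bK : K := (f * t + p * hA) / f
  have k1 : (f : K) * bK = f * t + p * hA := by
    simp only [bK]; field_simp
  have r1K : (0 : K) = a0 + a1 * p + p ^ 2 * hA := by
    have := congrArg (fun x : 𝓞 K => (x : K)) r1
    simpa using this
  rw [a0_eq, a1_eq] at r1K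
  push_cast at r1K
  have k2 : (p : K) * bK = - ((f : K) * (31 ^ 38 * s0)) := by
    apply mul_left_cancel₀ hfK
    linear_combination (p : K) * k1 - r1K
  have k3 : bK * (bK - t) = - ((31 ^ 38 * s0) * hA) := by
    apply mul_left_cancel₀ hfK
    linear_combination bK * k1 + hA * k2
  have hbint : IsIntegral ℤ bK := by
    have : IsIntegral (𝓞 K) bK := by
      obtain ⟨q, hq⟩ : ∃ q : 𝓞 K, algebraMap (𝓞 K) K q = (31 ^ 38 * s0) * hA :=
        ⟨(31 ^ 38 * s0) * hA, by simp only [map_mul, map_pow, map_intCast, map_ofNat]⟩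
      obtain ⟨r, hr⟩ : ∃ r : 𝓞 K, algebraMap (𝓞 K) K r = t := ⟨t, by simp⟩
      refine ⟨X ^ 2 - C r * X + C q, by monicity!, ?_⟩
      simp only [eval₂_add, eval₂_sub, eval₂_mul, eval₂_pow, eval₂_X, eval₂_C, hq, hr]
      linear_combination k3
    exact isIntegral_trans (R := ℤ) (A := 𝓞 K) bK this
  let b : 𝓞 K := ⟨bK, hbint⟩
  have hb : (b : K) = bK := rfl
  have hfin : Module.finrank ℚ K = 32 := by rw [pb.finrank, hdim]
  refine ⟨p, b, hA, aeval a H, ⟨?_, r2, ?_, ?_, ?_, ?_⟩, by simp [hp, ha], ?_⟩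
  · apply RingOfIntegers.coe_injective
    simpa [hb] using k1
  · apply RingOfIntegers.coe_injective
    simp only [map_mul, map_neg, map_pow, map_intCast, map_ofNat]
    exact k2
  · apply RingOfIntegers.coe_injective
    simp only [map_mul, map_sub, map_neg, map_pow, map_intCast, map_ofNat]
    exact k3
  · rw [← a0_eq]
    have : ((Algebra.norm ℤ p : ℤ) : ℚ) = a0 := by
      rw [Algebra.coe_norm_int]
      have e1 : (p : K) = -1 * (algebraMap ℚ K c - pb.gen) := by simp [hp, ha]
      have e2 : (-1 : K) = algebraMap ℚ K (-1) := by simp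
      rw [e1, map_mul, e2, Algebra.norm_algebraMap, hfin, Algebra.norm_eq_matrix_det pb.basis, map_sub]
      have e3 : Algebra.leftMulMatrix pb.basis (algebraMap ℚ K c) = Matrix.scalar _ (c : ℚ) := by
        rw [AlgHom.commutes]; rfl
      rw [e3, ← Matrix.eval_charpoly, charpoly_leftMulMatrix, hmin, ← PZ_map]
      have e4 : PZ.eval c = a0 := ofL_eval _ _
      rw [← e4, show ((-1 : ℚ) ^ 32) = 1 by norm_num]
      simp [eval_intCast_map]
    exact_mod_cast this
  · intro n
    have := Algebra.norm_algebraMap (R := ℤ) (S := 𝓞 K) n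
    rw [RingOfIntegers.rank, hfin] at this
    simpa using this
  · let gZ : ℤ[X] := C a1 + (X - C c) * h
    have hg : PZ - C a0 = (X - C c) * gZ := by
      simp only [gZ]; rw [hP]; ring
    have hm1 : (PZ - C a0).Monic := by
      apply hmon.sub_of_left
      exact lt_of_le_of_lt degree_C_le (by rw [← natDegree_pos_iff_degree_pos, hdeg]; norm_num)
    have hmg : gZ.Monic := (monic_X_sub_C c).of_mul_monic_left (hg ▸ hm1)
    have hdg : gZ.natDegree = 31 := by
      have := congrArg natDegree hg
      rw [natDegree_sub_C, hdeg, (monic_X_sub_C c).natDegree_mul hmg, natDegree_X_sub_C] at this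
      omega
    refine ⟨gZ.map (algebraMap ℤ ℚ), ?_, hmg.map _, ?_⟩
    · rw [natDegree_map_eq_of_injective (RingHom.injective_int _), hdg]
    · rw [map_mul, aeval_C, aeval_map_algebraMap]
      apply mul_left_cancel₀ hfK
      rw [hb, k1]
      have e5 : (hA : K) = aeval pb.gen h := by
        rw [hhA, ← ha]
        exact (aeval_algebraMap_apply K a h).symm
      simp only [gZ, map_add, map_mul, map_sub, aeval_X, aeval_C, e5, a1_eq, hp, ha]
      simp
      field_simp
end DP

open Polynomial
namespace DP
open NumberField

lemma discr_b {K : Type*} [Field K] [NumberField K] (pb : PowerBasis ℚ K)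
    (hdim : pb.dim = 32) (hmin : minpoly ℚ pb.gen = P) (b : Module.Basis (Fin 32) ℚ K)
    (hb : b = pb.basis.reindex (finCongr hdim)) :
    (∀ i, b i = pb.gen ^ (i : ℕ)) ∧ Algebra.discr ℚ b = -31 ^ 41 * (f : ℚ) ^ 2 := by
  have h1 : ∀ i, b i = pb.gen ^ (i : ℕ) := by
    intro i; rw [hb]; simp
  refine ⟨h1, ?_⟩
  have hα : aeval pb.gen PZ = 0 := by
    have := minpoly.aeval ℚ pb.gen
    rw [hmin, ← PZ_map] at this
    rwa [← algebraMap_int_eq, aeval_map_algebraMap] at this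
  rw [hb, Module.Basis.coe_reindex, Algebra.discr_reindex, Algebra.discr_powerBasis_eq_norm,
    hmin, ← PZ_map, ← algebraMap_int_eq, derivative_map, aeval_map_algebraMap, norm_deriv _ hα b h1,
    pb.finrank, hdim]
  norm_num

lemma discr_omega {K : Type*} [Field K] [NumberField K] (pb : PowerBasis ℚ K)
    (hdim : pb.dim = 32) (hmin : minpoly ℚ pb.gen = P) (p b : K) (hp : p = pb.gen - (c : K))
    (g : ℚ[X]) (hg : g.natDegree = 31) (hgm : g.Monic)
    (hb : b = aeval pb.gen (C (1 / (f : ℚ)) * g)) (w : Fin 32 → K)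
    (hw1 : ∀ i : Fin 31, w i.castSucc = p ^ (i : ℕ)) (hw2 : w (Fin.last 31) = b) :
    Algebra.discr ℚ w = -31 ^ 41 := by
  obtain ⟨hB, hD⟩ := discr_b pb hdim hmin _ rfl
  set B := pb.basis.reindex (finCongr hdim) with hBdef
  have hf : (f : ℚ) ≠ 0 := by
    have : f ≠ 0 := by decide +kernel
    exact_mod_cast this
  let Q : Fin 32 → ℚ[X] := Fin.snoc (α := fun _ => ℚ[X]) (fun i : Fin 31 => (X - C (c : ℚ)) ^ (i : ℕ))
    (C (1 / (f : ℚ)) * g)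
  have hQ1 : ∀ i : Fin 31, Q i.castSucc = (X - C (c : ℚ)) ^ (i : ℕ) := fun i => by
    simp [Q]
  have hQ2 : Q (Fin.last 31) = C (1 / (f : ℚ)) * g := by
    simp only [Q, Fin.snoc_last]
  have hdeg : ∀ i, (Q i).natDegree = i := by
    intro i
    induction i using Fin.lastCases with
    | last => rw [hQ2, natDegree_C_mul (by simpa using hf), hg]; rfl
    | cast i => rw [hQ1, natDegree_pow, natDegree_X_sub_C]; simp
  have hwQ : ∀ i, w i = aeval pb.gen (Q i) := by
    intro i
    induction i using Fin.lastCases with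
    | last => rw [hw2, hQ2, hb]
    | cast i => rw [hw1, hQ1, hp]; simp
  let T : Matrix (Fin 32) (Fin 32) ℚ := Matrix.of fun i j => (Q i).coeff j
  have hwT : w = (T.map (algebraMap ℚ K)).mulVec B := by
    ext i
    rw [hwQ, aeval_eq_sum_range' (n := 32) (by rw [hdeg]; exact i.2), Finset.sum_range]
    simp only [Matrix.mulVec, dotProduct, Matrix.map_apply, T, Matrix.of_apply, hB, Algebra.smul_def]
  have hT : T.det = 1 / f := by
    rw [Matrix.det_of_isLowerTriangular]
    · rw [Fin.prod_univ_castSucc]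
      have h1 : ∀ i : Fin 31, T i.castSucc i.castSucc = 1 := by
        intro i
        have := (monic_X_sub_C (c : ℚ)).pow (i : ℕ)
        have h2 := this.coeff_natDegree
        rw [natDegree_pow, natDegree_X_sub_C, mul_one] at h2
        simp only [T, Matrix.of_apply, hQ1, Fin.val_castSucc, h2]
      have h2 : T (Fin.last 31) (Fin.last 31) = 1 / f := by
        have := hgm.coeff_natDegree
        rw [hg] at this
        simp only [T, Matrix.of_apply, hQ2, Fin.val_last, coeff_C_mul, this, mul_one]
      rw [h2, Finset.prod_congr rfl (fun i _ => h1 i), Finset.prod_const_one, one_mul]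
    · intro i j hij
      simp only [T, Matrix.of_apply]
      apply coeff_eq_zero_of_natDegree_lt
      rw [hdeg]
      exact hij
  rw [hwT, Algebra.discr_of_matrix_mulVec, hD, hT]
  field_simp

theorem main {K : Type*} [Field K] [NumberField K] (pb : PowerBasis ℚ K)
    (hdim : pb.dim = 32) (hmin : minpoly ℚ pb.gen = P) : NumberField.discr K = -31 ^ 41 := by
  obtain ⟨p, b, h, H, S, hp, g, hg, hgm, hb⟩ := sit_exists pb hdim hmin
  let w : Fin 32 → 𝓞 K := Fin.snoc (α := fun _ => 𝓞 K) (fun i : Fin 31 => p ^ (i : ℕ)) b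
  have hw1 : ∀ i : Fin 31, w i.castSucc = p ^ (i : ℕ) := fun i => by simp [w]
  have hw2 : w (Fin.last 31) = b := by simp only [w, Fin.snoc_last]
  have hdw : Algebra.discr ℚ (fun i => (w i : K)) = -31 ^ 41 :=
    discr_omega pb hdim hmin p b hp g hg hgm hb _ (fun i => by simp [hw1]) (by simp only [hw2])
  have hfin : Module.finrank ℚ K = 32 := by rw [pb.finrank, hdim]
  have hcard : Fintype.card (Module.Free.ChooseBasisIndex ℤ (𝓞 K)) = Fintype.card (Fin 32) := by
    rw [← Module.finrank_eq_card_chooseBasisIndex, RingOfIntegers.rank, hfin]; simp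
  let e := Fintype.equivOfCardEq hcard
  let bA := (RingOfIntegers.basis K).reindex e
  let bK := (integralBasis K).reindex e
  have hbAK : ∀ i, bK i = (bA i : K) := by
    intro i
    simp [bK, bA, integralBasis_apply]
  have hdK : Algebra.discr ℚ bK = (discr K : ℚ) := by
    rw [coe_discr]
    simp only [bK]
    rw [Module.Basis.coe_reindex, Algebra.discr_reindex]
  let B : Matrix (Fin 32) (Fin 32) ℤ := Matrix.of fun i j => bA.repr (w i) j
  have hwB : ∀ i, w i = ∑ j, (B i j : 𝓞 K) * bA j := by
    intro i
    conv_lhs => rw [← bA.sum_repr (w i)]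
    simp [B]
  have hwBK : (fun i => (w i : K)) = ((B.map (Int.castRingHom ℚ)).map (algebraMap ℚ K)).mulVec bK := by
    ext i
    rw [hwB i]
    simp only [Matrix.mulVec, dotProduct, Matrix.map_apply, hbAK, map_sum, map_mul]
    simp
  have hdet : B.det ^ 2 * discr K = -31 ^ 41 := by
    rw [hwBK, Algebra.discr_of_matrix_mulVec, hdK, ← RingHom.mapMatrix_apply, ← RingHom.map_det] at hdw
    simp only [eq_intCast] at hdw
    exact_mod_cast hdw
  have h31 : ¬ (31 : ℤ) ∣ B.det := by
    intro hd
    have hz : (B.map (Int.castRingHom (ZMod 31))).det = 0 := by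
      rw [← RingHom.mapMatrix_apply, ← RingHom.map_det]
      exact (ZMod.intCast_zmod_eq_zero_iff_dvd _ 31).2 hd
    obtain ⟨v, hv, hvB⟩ := Matrix.exists_vecMul_eq_zero_iff.2 hz
    let u : Fin 32 → ℤ := fun i => ((v i).val : ℤ)
    have huv : ∀ i, (u i : ZMod 31) = v i := fun i => by simp [u]
    have hcol : ∀ j, (31 : ℤ) ∣ ∑ i, u i * B i j := by
      intro j
      apply (ZMod.intCast_zmod_eq_zero_iff_dvd _ 31).1
      have := congrFun hvB j
      simp only [Matrix.vecMul, dotProduct, Matrix.map_apply, Pi.zero_apply, eq_intCast] at this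
      push_cast
      simpa [huv] using this
    have hsum : (31 : 𝓞 K) ∣ ∑ i, (u i : 𝓞 K) * w i := by
      have : ∑ i, (u i : 𝓞 K) * w i = ∑ j, ((∑ i, u i * B i j : ℤ) : 𝓞 K) * bA j := by
        simp_rw [hwB, Finset.mul_sum]
        rw [Finset.sum_comm]
        refine Finset.sum_congr rfl fun j _ => ?_
        push_cast
        rw [Finset.sum_mul]
        refine Finset.sum_congr rfl fun i _ => ?_
        ring
      rw [this]
      apply Finset.dvd_sum
      intro j _
      obtain ⟨k, hk⟩ := hcol j
      rw [hk]
      exact ⟨k * bA j, by push_cast; ring⟩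
    rw [Fin.sum_univ_castSucc] at hsum
    simp only [hw1, hw2] at hsum
    obtain ⟨q1, q2⟩ := S.fin (fun i => u i.castSucc) (u (Fin.last 31)) hsum
    apply hv
    ext i
    rw [← huv]
    have : (u i : ZMod 31) = 0 := by
      apply (ZMod.intCast_zmod_eq_zero_iff_dvd _ 31).2
      induction i using Fin.lastCases with
      | last => exact q2
      | cast i => exact q1 i
    rw [this]; rfl
  have hun : IsUnit B.det := by
    have hc : IsCoprime (31 : ℤ) B.det := (Prime.coprime_iff_not_dvd p31).2 h31
    have hd : B.det ∣ 31 ^ 41 := by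
      refine ⟨-(B.det * discr K), ?_⟩
      linear_combination hdet
    exact (hc.pow_left (m := 41)).symm.isUnit_of_dvd' dvd_rfl hd
  have h1 : B.det ^ 2 = 1 := by
    rw [sq_eq_one_iff]; exact Int.isUnit_iff.1 hun
  rw [h1, one_mul] at hdet
  exact hdet

theorem main2 {K : Type*} [Field K] [NumberField K] (A : Algebra ℚ K)
    (pb : @PowerBasis ℚ K _ _ A)
    (hdim : pb.dim = 32) (hmin : minpoly ℚ pb.gen = P) : NumberField.discr K = -31 ^ 41 := by
  obtain rfl : A = DivisionRing.toRatAlgebra := Subsingleton.elim _ _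
  exact main pb hdim hmin

end DP

theorem discr_P (hP : Irreducible P) :
    haveI : Fact (Irreducible P) := ⟨hP⟩
    haveI : CharZero (AdjoinRoot P) :=
      charZero_of_injective_algebraMap (algebraMap ℚ (AdjoinRoot P)).injective
    haveI : FiniteDimensional ℚ (AdjoinRoot P) :=
      (AdjoinRoot.powerBasis hP.ne_zero).finite
    haveI : NumberField (AdjoinRoot P) := ⟨⟩
    NumberField.discr (AdjoinRoot P) = -31 ^ 41 := by
  haveI : Fact (Irreducible P) := ⟨hP⟩
  haveI : CharZero (AdjoinRoot P) :=
    charZero_of_injective_algebraMap (algebraMap ℚ (AdjoinRoot P)).injective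
  haveI : FiniteDimensional ℚ (AdjoinRoot P) :=
    (AdjoinRoot.powerBasis hP.ne_zero).finite
  haveI : NumberField (AdjoinRoot P) := ⟨⟩
  have hdeg : P.natDegree = 32 := by
    rw [P]; compute_degree!
  have hmon : P.Monic := by
    rw [P]; monicity!
  have hm := AdjoinRoot.minpoly_powerBasis_gen_of_monic hmon hP.ne_zero
  have hd : (AdjoinRoot.powerBasis hP.ne_zero).dim = 32 := by
    rw [AdjoinRoot.powerBasis_dim, hdeg]
  generalize AdjoinRoot.powerBasis hP.ne_zero = pb at hm hd
  exact DP.main2 _ pb hd hm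
end

section
/- The polynomial Q = x^30 - 13x^29 + 116x^28 - 899x^27 + 6003x^26 - 33002x^25 + 142158x^24 - 437871x^23 + 599981x^22 + 3161522x^21 - 30157709x^20 + 149069425x^19 - 545068137x^18 + 1602112888x^17 - 3929042061x^16 + 8240756348x^15 - 15020495335x^14 + 23992472995x^13 - 33394267804x^12 + 40034881756x^11 - 40888329774x^10 + 35730188833x^9 - 27316581262x^8 + 17713731976x^7 - 7068248851x^6 - 1463296732x^5 + 4054490087x^4 - 2555610007x^3 + 2573924261x^2 + 2363203645x - 261910751 is irreducible over the rational numbers ℚ. -/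
open Polynomial

noncomputable def Q : Polynomial ℚ :=
  X^30 - 13*X^29 + 116*X^28 - 899*X^27 + 6003*X^26 - 33002*X^25 + 142158*X^24 - 437871*X^23 + 599981*X^22 + 3161522*X^21 - 30157709*X^20 + 149069425*X^19 - 545068137*X^18 + 1602112888*X^17 - 3929042061*X^16 + 8240756348*X^15 - 15020495335*X^14 + 23992472995*X^13 - 33394267804*X^12 + 40034881756*X^11 - 40888329774*X^10 + 35730188833*X^9 - 27316581262*X^8 + 17713731976*X^7 - 7068248851*X^6 - 1463296732*X^5 + 4054490087*X^4 - 2555610007*X^3 + 2573924261*X^2 + 2363203645*X - 261910751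

namespace QIrr

noncomputable def Qz : Polynomial ℤ :=
  X^30 - 13*X^29 + 116*X^28 - 899*X^27 + 6003*X^26 - 33002*X^25 + 142158*X^24 - 437871*X^23 + 599981*X^22 + 3161522*X^21 - 30157709*X^20 + 149069425*X^19 - 545068137*X^18 + 1602112888*X^17 - 3929042061*X^16 + 8240756348*X^15 - 15020495335*X^14 + 23992472995*X^13 - 33394267804*X^12 + 40034881756*X^11 - 40888329774*X^10 + 35730188833*X^9 - 27316581262*X^8 + 17713731976*X^7 - 7068248851*X^6 - 1463296732*X^5 + 4054490087*X^4 - 2555610007*X^3 + 2573924261*X^2 + 2363203645*X - 261910751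

def Ql : List Bool := [true, true, true, true, true, false, true, false, false, true, false, false, false, true, true, false, true, false, true, true, true, false, true, true, false, false, true, true, false, true, true]
def c15 : List Bool := [false, false, false, false, true, false, true, false, true, false, false, true, true, true, false, false, true, true, false, false, false, false, true, false, true, false, true, true, true]
def c10 : List Bool := [false, false, true, true, true, true, false, false, true, true, true, true, false, true, true, false, true, true, false, false, true, false, true, false, false, true, false, true, true, true]
def c6 : List Bool := [false, true, true, true, false, true, false, false, true, true, true, false, true, true, false, false, false, true, false, true, false, true, true, true, true, true, false, false, true, true]

def cns (a : Bool) (l : List Bool) : List Bool :=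
  match l with
  | [] => bif a then [true] else []
  | b :: m => a :: b :: m

def add : List Bool → List Bool → List Bool
  | [], m => m
  | a :: l, [] => a :: l
  | a :: l, b :: m => cns (xor a b) (add l m)

/-- multiply by x, add a, reduce. -/
def shf (a : Bool) (r : List Bool) : List Bool :=
  bif Nat.beq (cns a r).length 31 then add (cns a r) Ql else cns a r

def sq : List Bool → List Bool
  | [] => []
  | a :: l => shf a (shf false (sq l))

def mul : List Bool → List Bool → List Bool
  | [], _ => []
  | a :: l, b => add (bif a then b else []) (shf false (mul l b))

def it : ℕ → List Bool
  | 0 => [false, true]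
  | n + 1 => sq (it n)

theorem it30 : it 30 = [false, true] := by decide +kernel
theorem it15 : mul c15 (add (it 15) [false, true]) = [true] := by decide +kernel
theorem it10 : mul c10 (add (it 10) [false, true]) = [true] := by decide +kernel
theorem it6 : mul c6 (add (it 6) [false, true]) = [true] := by decide +kernel

section
variable {K : Type*} [Field K] [CharP K 2] (α : K)

def b2 (a : Bool) : K := bif a then 1 else 0

def ev : List Bool → K
  | [] => 0
  | a :: l => b2 a + α * ev l

theorem ev_cns (a : Bool) (l : List Bool) : ev α (cns a l) = b2 a + α * ev α l := by
  cases l <;> cases a <;> simp [cns, ev, b2]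

theorem b2_xor (a b : Bool) : (b2 (xor a b) : K) = b2 a + b2 b := by
  cases a <;> cases b <;> simp [b2, CharTwo.add_self_eq_zero]

theorem ev_add (l m : List Bool) : ev α (add l m) = ev α l + ev α m := by
  induction l generalizing m with
  | nil => simp [add, ev]
  | cons a l ih =>
    cases m with
    | nil => simp [add, ev]
    | cons b m => simp only [add, ev_cns, ih, ev, b2_xor]; ring

theorem ev_shf (h : ev α Ql = 0) (a : Bool) (r : List Bool) :
    ev α (shf a r) = b2 a + α * ev α r := by
  unfold shf
  cases Nat.beq (cns a r).length 31 <;> simp [ev_add, ev_cns, h]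

theorem ev_sq (h : ev α Ql = 0) (l : List Bool) : ev α (sq l) = ev α l ^ 2 := by
  induction l with
  | nil => simp [sq, ev]
  | cons a l ih =>
    simp only [sq, ev_shf α h, ih, ev, CharTwo.add_sq]
    cases a <;> simp [b2] <;> ring

theorem ev_mul (h : ev α Ql = 0) (l m : List Bool) : ev α (mul l m) = ev α l * ev α m := by
  induction l with
  | nil => simp [mul, ev]
  | cons a l ih =>
    simp only [mul, ev_shf α h, ev_add, ih, ev]
    cases a <;> simp [b2, ev] <;> ring

theorem ev_X : ev α [false, true] = α := by simp [ev, b2]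

theorem ev_it (h : ev α Ql = 0) (n : ℕ) : ev α (it n) = (fun x : K => x ^ 2)^[n] α := by
  induction n with
  | zero => simp [it, ev_X]
  | succ n ih => rw [Function.iterate_succ_apply', it, ev_sq α h, ih]

theorem not_per (h : ev α Ql = 0) (n : ℕ) (c : List Bool)
    (hc : mul c (add (it n) [false, true]) = [true]) :
    ¬ Function.IsPeriodicPt (fun x : K => x ^ 2) n α := by
  intro hp
  have h1 := congrArg (ev α) hc
  rw [ev_mul α h, ev_add, ev_it α h, ev_X, hp.eq, CharTwo.add_self_eq_zero] at h1
  simp [ev, b2] at h1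

end

theorem Qz_deg : Qz.natDegree = 30 := by unfold Qz; compute_degree!

theorem Qz_monic : Qz.Monic := by
  unfold Qz; monicity!

theorem ev_root {K : Type*} [Field K] [CharP K 2] (α : K)
    (h : Qz.eval₂ (Int.castRingHom K) α = 0) : ev α Ql = 0 := by
  have h2 : (2 : K) = 0 := CharTwo.two_eq_zero
  simp [Qz] at h
  simp [Ql, ev, b2]
  linear_combination h - ((-130955376)*α^0 + (1181601822)*α^1 + (1286962130)*α^2 + (-1277805004)*α^3 + (2027245043)*α^4 + (-731648366)*α^5 + (-3534124426)*α^6 + (8856865988)*α^7 + (-13658290631)*α^8 + (17865094416)*α^9 + (-20444164887)*α^10 + (20017440878)*α^11 + (-16697133902)*α^12 + (11996236497)*α^13 + (-7510247668)*α^14 + (4120378174)*α^15 + (-1964521031)*α^16 + (801056444)*α^17 + (-272534069)*α^18 + (74534712)*α^19 + (-15078855)*α^20 + (1580761)*α^21 + (299990)*α^22 + (-218936)*α^23 + (71079)*α^24 + (-16501)*α^25 + (3001)*α^26 + (-450)*α^27 + (58)*α^28 + (-7)*α^29 + (0)*α^30) * h2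

theorem iter_sq {K : Type*} [Field K] (n : ℕ) (x : K) :
    (fun x : K => x ^ 2)^[n] x = x ^ 2 ^ n := by
  simp

theorem irr2 : Irreducible (Qz.map (Int.castRingHom (ZMod 2))) := by
  have : Fact (Nat.Prime 2) := ⟨Nat.prime_two⟩
  set P := Qz.map (Int.castRingHom (ZMod 2)) with hP
  have hdeg : P.natDegree = 30 := by rw [hP, Qz_monic.natDegree_map, Qz_deg]
  have hmon : P.Monic := Qz_monic.map _
  obtain ⟨g, hg, hgP⟩ := Polynomial.exists_irreducible_of_natDegree_pos (f := P) (by omega)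
  have : Fact (Irreducible g) := ⟨hg⟩
  let K := AdjoinRoot g
  let α : K := AdjoinRoot.root g
  have : CharP K 2 := charP_of_injective_algebraMap (algebraMap (ZMod 2) K).injective 2
  let pb := AdjoinRoot.powerBasis hg.ne_zero
  have : Module.Finite (ZMod 2) K := pb.finite
  have : Finite K := Module.finite_of_finite (ZMod 2)
  have : Fintype K := Fintype.ofFinite K
  have hfr : Module.finrank (ZMod 2) K = g.natDegree := by
    rw [pb.finrank]; rfl
  have hcard : Fintype.card K = 2 ^ g.natDegree := by
    rw [Module.card_eq_pow_finrank (K := ZMod 2), hfr, ZMod.card]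
  have hroot : ev α Ql = 0 := by
    apply ev_root
    have h1 : P.eval₂ (AdjoinRoot.of g) α = 0 := by
      obtain ⟨q, hq⟩ := hgP
      rw [hq, Polynomial.eval₂_mul, AdjoinRoot.eval₂_root, zero_mul]
    rw [hP, Polynomial.eval₂_map] at h1
    convert h1
    exact RingHom.ext_int _ _
  have p30 : Function.IsPeriodicPt (fun x : K => x ^ 2) 30 α := by
    have := ev_it α hroot 30
    rw [it30, ev_X] at this
    exact this.symm
  have pd : Function.IsPeriodicPt (fun x : K => x ^ 2) g.natDegree α := by
    change _ = _
    rw [iter_sq, ← hcard, FiniteField.pow_card]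
  have pg := p30.gcd pd
  have hdvd : 30 ∣ g.natDegree := by
    by_contra hn
    have h1 : Nat.gcd 30 g.natDegree ∣ 30 := Nat.gcd_dvd_left _ _
    have h2 : Nat.gcd 30 g.natDegree ≠ 30 := fun h => hn (Nat.gcd_eq_left_iff_dvd.mp h)
    generalize Nat.gcd 30 g.natDegree = e at *
    have h3 : e ∣ 15 ∨ e ∣ 10 ∨ e ∣ 6 := by
      have : e ≤ 30 := Nat.le_of_dvd (by norm_num) h1
      interval_cases e <;> revert h1 h2 <;> decide
    rcases h3 with h3 | h3 | h3
    · exact not_per α hroot _ _ it15 (pg.trans_dvd h3)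
    · exact not_per α hroot _ _ it10 (pg.trans_dvd h3)
    · exact not_per α hroot _ _ it6 (pg.trans_dvd h3)
  have hpos : 0 < g.natDegree := hg.natDegree_pos
  have hle := Nat.le_of_dvd hpos hdvd
  obtain ⟨q, hq⟩ := hgP
  have hq0 : q ≠ 0 := by
    rintro rfl
    rw [mul_zero] at hq
    exact hmon.ne_zero hq
  have hqd : q.natDegree = 0 := by
    have := Polynomial.natDegree_mul hg.ne_zero hq0
    rw [← hq, hdeg] at this
    omega
  have hu : IsUnit q := by
    rw [Polynomial.isUnit_iff_degree_eq_zero, Polynomial.degree_eq_natDegree hq0, hqd]; rfl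
  rw [hq]
  exact (irreducible_mul_isUnit hu).mpr hg

end QIrr

theorem irreducible_Q : Irreducible Q := by
  have h1 : Irreducible QIrr.Qz :=
    QIrr.Qz_monic.irreducible_of_irreducible_map _ _ QIrr.irr2
  have h2 := (QIrr.Qz_monic.irreducible_iff_irreducible_map_fraction_map (K := ℚ)).mp h1
  have h3 : QIrr.Qz.map (algebraMap ℤ ℚ) = Q := by
    simp [QIrr.Qz, Q]
  rwa [h3] at h2
end

section
/- Let Q = x^30 - 13x^29 + 116x^28 - 899x^27 + 6003x^26 - 33002x^25 + 142158x^24 - 437871x^23 + 599981x^22 + 3161522x^21 - 30157709x^20 + 149069425x^19 - 545068137x^18 + 1602112888x^17 - 3929042061x^16 + 8240756348x^15 - 15020495335x^14 + 23992472995x^13 - 33394267804x^12 + 40034881756x^11 - 40888329774x^10 + 35730188833x^9 - 27316581262x^8 + 17713731976x^7 - 7068248851x^6 - 1463296732x^5 + 4054490087x^4 - 2555610007x^3 + 2573924261x^2 + 2363203645x - 261910751 ∈ ℚ[x]. The Galois group of Q over ℚ (i.e., the Galois group of its splitting field over ℚ) is isomorphic to PGL₂(F₂₉). -/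
open Polynomial Matrix

namespace PGLid
open Polynomial

variable {R S : Type*} [CommRing R] [CommRing S]

def axpy {R : Type*} [Add R] [Mul R] (c : R) : List R → List R → List R
  | [], a => a
  | h :: t, [] => (c * h) :: axpy c t []
  | h :: t, h' :: t' => (c * h + h') :: axpy c t t'

def mulL {R : Type*} [Add R] [Mul R] [Zero R] (f g : List R) : List R :=
  f.foldr (fun c acc => axpy c g (0 :: acc)) []

def stp {R : Type*} [Add R] [Mul R] [Zero R] [Neg R] (q : List R) (c : R) (acc : List R) : List R :=
  axpy (-((c :: acc).getD 30 0)) q (c :: acc)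

def red {R : Type*} [Add R] [Mul R] [Zero R] [Neg R] (q s : List R) : List R :=
  s.foldr (stp q) []

def ev {R : Type*} [Add R] [Mul R] [Zero R] (l : List R) (x : R) : R :=
  l.foldr (fun c acc => c + x * acc) 0

@[simp] lemma ev_nil (x : R) : ev [] x = 0 := rfl
@[simp] lemma ev_cons (c : R) (l : List R) (x : R) : ev (c :: l) x = c + x * ev l x := rfl

lemma ev_axpy (c x : R) : ∀ b a : List R, ev (axpy c b a) x = c * ev b x + ev a x
  | [], a => by simp [axpy]
  | h :: t, [] => by simp [axpy, ev_axpy c x t []]; ring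
  | h :: t, h' :: t' => by simp [axpy, ev_axpy c x t t']; ring

lemma ev_mulL (x : R) (f g : List R) : ev (mulL f g) x = ev f x * ev g x := by
  induction f with
  | nil => simp [mulL]
  | cons c f ih =>
    have : mulL (c :: f) g = axpy c g (0 :: mulL f g) := rfl
    rw [this, ev_axpy]; simp [ih]; ring

lemma ev_red (q : List R) (x : R) (h : ev q x = 0) (s : List R) : ev (red q s) x = ev s x := by
  induction s with
  | nil => rfl
  | cons c s ih =>
    have : red q (c :: s) = axpy (-((c :: red q s).getD 30 0)) q (c :: red q s) := rfl
    rw [this, ev_axpy]; simp [ih, h]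

lemma map_axpy (f : R →+* S) (c : R) : ∀ b a : List R,
    (axpy c b a).map f = axpy (f c) (b.map f) (a.map f)
  | [], a => by simp [axpy]
  | h :: t, [] => by simpa [axpy] using map_axpy f c t []
  | h :: t, h' :: t' => by simpa [axpy] using map_axpy f c t t'

lemma map_mulL (f : R →+* S) (a b : List R) : (mulL a b).map f = mulL (a.map f) (b.map f) := by
  induction a with
  | nil => rfl
  | cons c a ih =>
    have : mulL (c :: a) b = axpy c b (0 :: mulL a b) := rfl
    rw [this, map_axpy, List.map_cons, ih, map_zero]; rfl

lemma map_getD (f : R →+* S) (l : List R) (n : ℕ) : f (l.getD n 0) = (l.map f).getD n 0 := by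
  simp [List.getD]
  cases l[n]? <;> simp

lemma map_red (f : R →+* S) (q s : List R) : (red q s).map f = red (q.map f) (s.map f) := by
  induction s with
  | nil => rfl
  | cons c s ih =>
    have : red q (c :: s) = axpy (-((c :: red q s).getD 30 0)) q (c :: red q s) := rfl
    rw [this, map_axpy, map_neg, map_getD]; simp only [List.map_cons, ih]; rfl

lemma map_ev (f : R →+* S) (l : List R) (x : R) : f (ev l x) = ev (l.map f) (f x) := by
  induction l with
  | nil => simp
  | cons c l ih => simp [ih]

/-- casts of an integer list -/
def cz (R : Type*) [CommRing R] (l : List ℤ) : List R := l.map (Int.castRingHom R)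

lemma map_cz (f : R →+* S) (l : List ℤ) : (cz R l).map f = cz S l := by
  simp [cz]

def pre {R : Type*} [Add R] [Mul R] [Zero R] [Neg R] (c29 y ly : R) (rl ll : List R) : List R :=
  let e := axpy (-ly) ll (axpy c29 (mulL rl rl) [])
  axpy (-y) e (0 :: e)

/-- the big expression, `rl` list of rows evaluated at y, `ly` value of l at y -/
def big {R : Type*} [Add R] [Mul R] [Zero R] [Neg R] (c29 y ly : R) (rl ll q : List R) : List R :=
  red q (pre c29 y ly rl ll)

lemma map_pre (f : R →+* S) (c y ly : R) (rl ll : List R) :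
    (pre c y ly rl ll).map f = pre (f c) (f y) (f ly) (rl.map f) (ll.map f) := by
  simp [pre, map_axpy, map_mulL]

lemma map_big (f : R →+* S) (c y ly : R) (rl ll q : List R) :
    (big c y ly rl ll q).map f = big (f c) (f y) (f ly) (rl.map f) (ll.map f) (q.map f) := by
  simp [big, map_red, map_pre]

lemma ev_big (c y ly x : R) (rl ll q : List R) (h : ev q x = 0) :
    ev (big c y ly rl ll q) x = (x - y) * (c * (ev rl x) ^ 2 - ly * ev ll x) := by
  simp only [big, pre, ev_red q x h, ev_axpy, ev_cons, ev_mulL, ev_nil]; ring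

/-! bounds -/

def w : ℕ := 2 ^ 42

def Bd (f : ℤ[X]) (n : ℕ) : Prop :=
  ∃ a b : ℕ[X], f = a.map (Nat.castRingHom ℤ) - b.map (Nat.castRingHom ℤ) ∧ a.eval w + b.eval w ≤ n

lemma Bd.mono {f : ℤ[X]} {n m : ℕ} (h : Bd f n) (hm : n ≤ m) : Bd f m := by
  obtain ⟨a, b, h1, h2⟩ := h; exact ⟨a, b, h1, h2.trans hm⟩

lemma Bd.add {f g : ℤ[X]} {n m : ℕ} (h : Bd f n) (h' : Bd g m) : Bd (f + g) (n + m) := by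
  obtain ⟨a, b, h1, h2⟩ := h
  obtain ⟨a', b', h1', h2'⟩ := h'
  refine ⟨a + a', b + b', ?_, ?_⟩
  · rw [h1, h1', Polynomial.map_add, Polynomial.map_add]; ring
  · simp only [eval_add]; omega

lemma Bd.neg {f : ℤ[X]} {n : ℕ} (h : Bd f n) : Bd (-f) n := by
  obtain ⟨a, b, h1, h2⟩ := h
  exact ⟨b, a, by rw [h1]; ring, by omega⟩

lemma Bd.mul {f g : ℤ[X]} {n m : ℕ} (h : Bd f n) (h' : Bd g m) : Bd (f * g) (n * m) := by
  obtain ⟨a, b, h1, h2⟩ := h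
  obtain ⟨a', b', h1', h2'⟩ := h'
  refine ⟨a * a' + b * b', a * b' + b * a', ?_, ?_⟩
  · rw [h1, h1']; simp only [Polynomial.map_add, Polynomial.map_mul]; ring
  · simp only [eval_add, eval_mul]
    calc _ = (a.eval w + b.eval w) * (a'.eval w + b'.eval w) := by ring
      _ ≤ _ := Nat.mul_le_mul h2 h2'

lemma Bd.zero : Bd 0 0 := ⟨0, 0, by simp, by simp⟩
lemma Bd.X : Bd X w := ⟨Polynomial.X, 0, by simp, by simp⟩
lemma Bd.int (c : ℤ) : Bd (c : ℤ[X]) c.natAbs := by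
  rcases Int.natAbs_eq c with h | h
  · refine ⟨C c.natAbs, 0, ?_, by simp⟩
    rw [h]; simp
  · refine ⟨0, C c.natAbs, ?_, by simp⟩
    rw [h]; simp

def AB (l : List ℤ[X]) (n : ℕ) : Prop := ∀ t ∈ l, Bd t n

lemma AB.cons {c : ℤ[X]} {l : List ℤ[X]} {n : ℕ} (h : Bd c n) (h' : AB l n) : AB (c :: l) n := by
  intro t ht
  rcases List.mem_cons.mp ht with rfl | ht
  · exact h
  · exact h' t ht

lemma AB.nil (n : ℕ) : AB [] n := by intro t ht; simp at ht

lemma AB.mono {l : List ℤ[X]} {n m : ℕ} (h : AB l n) (hm : n ≤ m) : AB l m :=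
  fun t ht => (h t ht).mono hm

lemma AB.axpy {c : ℤ[X]} {m n1 n2 : ℕ} (hc : Bd c m) : ∀ {b a : List ℤ[X]}, AB b n1 → AB a n2 →
    AB (axpy c b a) (m * n1 + n2)
  | [], a, _, ha => by
    simpa [PGLid.axpy] using ha.mono (by omega)
  | h :: t, [], hb, ha => by
    refine AB.cons ((hc.mul (hb h (by simp))).mono (by omega)) ?_
    exact AB.axpy hc (fun t ht => hb t (by simp [ht])) ha
  | h :: t, h' :: t', hb, ha => by
    refine AB.cons ((hc.mul (hb h (by simp))).add (ha h' (by simp))) ?_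
    exact AB.axpy hc (fun t ht => hb t (by simp [ht])) (fun t ht => ha t (by simp [ht]))

lemma AB.mulL {f g : List ℤ[X]} {m n : ℕ} (hf : AB f m) (hg : AB g n) :
    AB (mulL f g) (f.length * (m * n)) := by
  induction f with
  | nil => exact AB.nil _
  | cons c f ih =>
    have : PGLid.mulL (c :: f) g = PGLid.axpy c g (0 :: PGLid.mulL f g) := rfl
    rw [this]
    refine (AB.axpy (hf c (by simp)) hg (AB.cons (Bd.zero.mono (Nat.zero_le _))
      (ih fun t ht => hf t (by simp [ht])))).mono ?_
    simp only [List.length_cons]; apply le_of_eq; ring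

lemma AB.getD {l : List ℤ[X]} {n : ℕ} (h : AB l n) (k : ℕ) : Bd (l.getD k 0) n := by
  rw [List.getD]
  cases hk : l[k]? with
  | none => simpa using Bd.zero.mono (Nat.zero_le _)
  | some t => simpa using h t (List.mem_of_getElem? hk)

lemma AB.red {q s : List ℤ[X]} {n h : ℕ} (hq : AB q h) (hs : AB s n) :
    AB (red q s) (n * (1 + h) ^ s.length) := by
  induction s with
  | nil => exact AB.nil _
  | cons c s ih =>
    have : PGLid.red q (c :: s) = PGLid.axpy (-((c :: PGLid.red q s).getD 30 0)) q (c :: PGLid.red q s) := rfl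
    rw [this]
    have h1 : AB (c :: PGLid.red q s) (n * (1 + h) ^ s.length) := by
      refine AB.cons ((hs c (by simp)).mono ?_) (ih fun t ht => hs t (by simp [ht]))
      exact Nat.le_mul_of_pos_right _ (by positivity)
    refine (AB.axpy (h1.getD 30).neg hq h1).mono ?_
    simp only [List.length_cons]; apply le_of_eq; ring

lemma bd_ev (l : List ℤ) : Bd (ev (cz ℤ[X] l) X) (ev (l.map Int.natAbs) w) := by
  induction l with
  | nil => exact Bd.zero
  | cons c l ih =>
    have := (Bd.int c).add (Bd.X.mul ih)
    exact this

lemma ab_cz (l : List ℤ) (n : ℕ) (h : ∀ c ∈ l, c.natAbs ≤ n) : AB (cz ℤ[X] l) n := by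
  intro t ht
  simp only [cz, List.mem_map] at ht
  obtain ⟨c, hc, rfl⟩ := ht
  exact (by simpa using Bd.int c : Bd _ c.natAbs).mono (h c hc)

/-! remainders -/

/-- small remainder -/
def Rm (q f : ℤ[X]) (n : ℕ) : Prop :=
  ∃ g : ℤ[X], q ∣ f - g ∧ (∀ i, 30 ≤ i → g.coeff i = 0) ∧ ∀ i, |g.coeff i| ≤ n

lemma Rm.add {q f f' : ℤ[X]} {n n' : ℕ} (h : Rm q f n) (h' : Rm q f' n') : Rm q (f + f') (n + n') := by
  obtain ⟨g, h1, h2, h3⟩ := h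
  obtain ⟨g', h1', h2', h3'⟩ := h'
  refine ⟨g + g', ?_, ?_, ?_⟩
  · have := dvd_add h1 h1'; convert this using 1; ring
  · intro i hi; simp [h2 i hi, h2' i hi]
  · intro i; rw [coeff_add]; push_cast
    exact (abs_add_le _ _).trans (add_le_add (h3 i) (h3' i))

lemma Rm.neg {q f : ℤ[X]} {n : ℕ} (h : Rm q f n) : Rm q (-f) n := by
  obtain ⟨g, h1, h2, h3⟩ := h
  refine ⟨-g, ?_, ?_, ?_⟩
  · have := (dvd_neg).mpr h1; convert this using 1; ring
  · intro i hi; simp [h2 i hi]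
  · intro i; rw [coeff_neg, abs_neg]; exact h3 i

lemma Rm.smul {q f : ℤ[X]} {n : ℕ} (c : ℕ) (h : Rm q f n) : Rm q (C (c : ℤ) * f) (c * n) := by
  obtain ⟨g, h1, h2, h3⟩ := h
  refine ⟨C (c : ℤ) * g, ?_, ?_, ?_⟩
  · rw [← mul_sub]; exact h1.mul_left _
  · intro i hi; simp [h2 i hi]
  · intro i; rw [coeff_C_mul, abs_mul]; push_cast
    rw [Nat.abs_cast]; exact mul_le_mul_of_nonneg_left (h3 i) (by positivity)

lemma Rm.X {q f : ℤ[X]} {n : ℕ} (hq : q.coeff 30 = 1) (hq' : ∀ i, 30 < i → q.coeff i = 0)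
    (hw : ∀ i, |q.coeff i| + 1 ≤ w) (h : Rm q f n) : Rm q (X * f) (w * n) := by
  obtain ⟨g, h1, h2, h3⟩ := h
  refine ⟨Polynomial.X * g - C (g.coeff 29) * q, ?_, ?_, ?_⟩
  · have := dvd_add (h1.mul_left Polynomial.X) (dvd_mul_left q (C (g.coeff 29)))
    convert this using 1; ring
  · intro i hi
    obtain ⟨j, rfl⟩ : ∃ j, i = j + 1 := ⟨i - 1, by omega⟩
    rw [coeff_sub, coeff_X_mul, coeff_C_mul]
    rcases Nat.eq_or_lt_of_le hi with h | h
    · obtain rfl : j = 29 := by omega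
      rw [hq]; ring
    · rw [h2 j (by omega), hq' _ h]; ring
  · intro i
    have h4 : |(Polynomial.X * g).coeff i| ≤ (n : ℤ) := by
      cases i with
      | zero => simp
      | succ j => rw [coeff_X_mul]; exact h3 j
    rw [coeff_sub, coeff_C_mul]
    calc _ ≤ |(Polynomial.X * g).coeff i| + |g.coeff 29 * q.coeff i| := abs_sub _ _
      _ ≤ (n : ℤ) + n * |q.coeff i| := by
        rw [abs_mul]; exact add_le_add h4 (mul_le_mul_of_nonneg_right (h3 29) (abs_nonneg _))
      _ = n * (|q.coeff i| + 1) := by ring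
      _ ≤ n * w := mul_le_mul_of_nonneg_left (hw i) (by positivity)
      _ = _ := by push_cast; ring

lemma Rm.nat {q : ℤ[X]} (hq : q.coeff 30 = 1) (hq' : ∀ i, 30 < i → q.coeff i = 0)
    (hw : ∀ i, |q.coeff i| + 1 ≤ w) (a : ℕ[X]) : Rm q (a.map (Nat.castRingHom ℤ)) (a.eval w) := by
  induction a using Polynomial.induction_on' with
  | add a b ha hb => simpa using ha.add hb
  | monomial k c =>
    have : Rm q (Polynomial.X ^ k) (w ^ k) := by
      induction k with
      | zero =>
        refine ⟨1, by simp, ?_, ?_⟩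
        · intro i hi; rw [coeff_one, if_neg (by omega)]
        · intro i; rw [coeff_one]; split_ifs <;> simp
      | succ k ih => rw [pow_succ', pow_succ']; exact ih.X hq hq' hw
    have := this.smul c
    rw [map_monomial, eval_monomial, ← C_mul_X_pow_eq_monomial]
    exact this

lemma Bd.rm {q f : ℤ[X]} {n : ℕ} (hq : q.coeff 30 = 1) (hq' : ∀ i, 30 < i → q.coeff i = 0)
    (hw : ∀ i, |q.coeff i| + 1 ≤ w) (h : Bd f n) : Rm q f n := by
  obtain ⟨a, b, h1, h2⟩ := h
  obtain ⟨g, e1, e2, e3⟩ := (Rm.nat hq hq' hw a).add (Rm.nat hq hq' hw b).neg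
  refine ⟨g, by rw [h1, sub_eq_add_neg]; exact e1, e2, fun i => (e3 i).trans (by exact_mod_cast h2)⟩

lemma small_zero {n : ℕ} {B : ℤ} (hB : (n : ℤ) < B) : ∀ (d : ℕ) (g : ℤ[X]),
    (∀ i, d ≤ i → g.coeff i = 0) → (∀ i, |g.coeff i| ≤ n) → g.eval B = 0 → g = 0
  | 0, g, h, _, _ => by ext i; simp [h i (Nat.zero_le _)]
  | d + 1, g, h, h1, h2 => by
    have e : g.eval B = (divX g).eval B * B + g.coeff 0 := by
      conv_lhs => rw [← divX_mul_X_add g]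
      simp
    have c0 : g.coeff 0 = 0 := by
      apply Int.eq_zero_of_abs_lt_dvd (m := B)
      · refine ⟨-(divX g).eval B, ?_⟩
        linarith
      · exact lt_of_le_of_lt (h1 0) hB
    have hB0 : B ≠ 0 := by have : (0 : ℤ) ≤ n := by positivity
                           omega
    have := small_zero hB d (divX g) (fun i hi => by rw [coeff_divX]; exact h _ (by omega))
      (fun i => by rw [coeff_divX]; exact h1 _) (by
        rw [c0, h2, add_zero] at e
        exact (mul_eq_zero.mp e.symm).resolve_right hB0)
    rw [← divX_mul_X_add g, this, c0]; simp

lemma Rm.dvd {q f : ℤ[X]} {n : ℕ} {B : ℤ} (h : Rm q f n) (hB : (n : ℤ) < B)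
    (hs : n * (∑ i ∈ Finset.range 30, B ^ i) < q.eval B) (hd : q.eval B ∣ f.eval B) : q ∣ f := by
  obtain ⟨g, h1, h2, h3⟩ := h
  have hB0 : 0 ≤ B := by have : (0 : ℤ) ≤ n := by positivity
                         omega
  have hg : g.eval B = 0 := by
    apply Int.eq_zero_of_abs_lt_dvd (m := q.eval B)
    · obtain ⟨u, hu⟩ := h1
      have : g = f - q * u := by rw [← hu]; ring
      rw [this, eval_sub, eval_mul]
      exact dvd_sub hd (dvd_mul_right _ _)
    · refine lt_of_le_of_lt ?_ hs
      have hdeg : g.natDegree < 30 := by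
        rcases Nat.lt_or_ge g.natDegree 30 with h | h
        · exact h
        · have := h2 _ h
          simp at this
          simp [this] at h
      rw [eval_eq_sum_range' hdeg, Finset.mul_sum]
      refine (Finset.abs_sum_le_sum_abs _ _).trans (Finset.sum_le_sum fun i _ => ?_)
      rw [abs_mul, abs_of_nonneg (pow_nonneg hB0 i)]
      exact mul_le_mul_of_nonneg_right (h3 i) (pow_nonneg hB0 i)
  have := small_zero hB 30 g h2 h3 hg
  simpa [this] using h1

end PGLid

def qc : List ℤ := [-261910751, 2363203645, 2573924261, -2555610007, 4054490087, -1463296732, -7068248851, 17713731976, -27316581262, 35730188833, -40888329774, 40034881756, -33394267804, 23992472995, -15020495335, 8240756348, -3929042061, 1602112888, -545068137, 149069425, -30157709, 3161522, 599981, -437871, 142158, -33002, 6003, -899, 116, -13]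
def lc : List ℤ := [-9490617109600672519567352278997861, 85241315759366675138582122404151355, 97104611403271761727561372226298668, -91489130969139912726688432599220756, 140438243243655011130396261360927880, -43687681493736894719075464764651127, -263247699064914077522965725365908534, 633429705143366181167193232273940599, -955372799179250483582495331155551079, 1232678113368202345644083925670317115, -1394820945754158916493393652903904627, 1345543216231269783090531797987941777, -1099426281161257375013334688181599340, 769172006377845704186008763401715428, -465937521319668750441173554675583419, 245279416786304139173295363216239517, -110520323124010634561062016590630823, 41365136131247328975278151288390271, -12153058344093667686816220953152890, 2448718609723776738002694282672591, -140040715969166726473629395139215, -128096122176563686136580630228400, 64329900156430322659733552874977, -17681960770800238290843162642812, 3095358878379686139697840743968, -237363155988456395134388737540, -46969135069729511984084511718, 19884959274908403414915009829, -3344547528823655334431518702, 257045425003118818088789074]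
def rc : List (List ℤ) := [[-813413138585299281232, 3407452494169437022754, -1599074030933661638092, -53387839768717333156, -6277611788210425709095, 10682683887654864606955, -13580342013816387366998, 16555536779506779279684, -17835491163561685209907, 11628308732512904300916, 896970160227370183782, -12318045314878347451300, 16983385206082001005603, -15000481268156001151569, 10054898728210361704133, -5411067212514263367871, 2385540420773470150111, -859121893230538004674, 246083589544448124787, -51788042220765587870, 5639851985328560585, 1011442517896092611, -742762847945169011, 232742627827221591, -51833569444121734, 9225620016685325, -1418865649144889, 194000680692627, -23314026302203, 1787103092631],
  [3407452494169437022754, 11647568737858299745104, 22590201624898364581142, -24067504451288415605828, 25119410100381034059376, -16999784460761109873500, -15914181328956674649775, 56212534888109806689393, -73264977331487216528537, 64385569010735434974444, -48765213207365899918239, 37112784493220925734920, -28824103339872580405579, 20561536357068988003956, -12361752078478293739239, 6174643434075626775331, -2553313082856815716055, 888650424381138733886, -261349300308899442417, 66084212097037552292, -15382611935656587050, 3761178758703594899, -1053268886848037236, 301176818756449076, -73523649942320612, 14454760536550196, -2374568323294330, 335039341326586, -43340268097515, 3041441100866],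
  [-1599074030933661638092, 22590201624898364581142, 16216211799411221571608, -50898347820379401353102, 89383807016540607822895, -105057505786343656942882, 64140844182455672694113, 37498704593696527697253, -154521539065427581971379, 248051441742114243539321, -293475163595132534595118, 280513399548914529620231, -222600298115483579678235, 148509846008933437980382, -83869586777522102207720, 40328255432909845305624, -16497929930642831852763, 5689723749853257489739, -1612345586229411601319, 352412123290268484562, -47269921374343559708, -2759409441640760153, 4035580718189387341, -1443295105012749105, 344125090260108982, -61516029675137841, 8681097114430343, -1029745217083334, 107588512622819, -9597698777823],
  [-53387839768717333156, -24067504451288415605828, -50898347820379401353102, 65120355226478019444762, -42511811972150825403333, 17767342073446134429853, 43025994372534741366518, -152757096955821501833217, 245052453897676312878972, -288484819265777987655066, 289857441391693012511692, -258800533268654888245192, 201989999811156747573602, -134458332369504799254855, 74685382260932534345168, -34410659933989376995731, 13023694082463739126118, -3971017059200128956424, 924811556265330605595, -135422752183758733879, -2638047981670389592, 8717468031809517083, -3005515302275664178, 620782701392123302, -83779617962359026, 6413066908843936, 264781139529399, -209472510002068, 55534303986889, -9040960933272],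
  [-6277611788210425709095, 25119410100381034059376, 89383807016540607822895, -42511811972150825403333, -88252180270115854239598, 196870340445027187709073, -247757388054738618982631, 248926936922362247617601, -198922275098925048009700, 122031673417369953548936, -59053575718703997134754, 26690307514797639122765, -17492629539247259999746, 15261275574931285160597, -11720337271193250124337, 7207942798160366758113, -3401842865065808101925, 1187588579128658333939, -268862757126181287936, 14712186441353005811, 15576388995201762123, -6684112423214667234, 1216184313244381630, 21226991994239079, -71148779326243771, 20735777373215876, -3918678470481810, 616033938896102, -98888112212189, 11850321660431],
  [10682683887654864606955, -16999784460761109873500, -105057505786343656942882, 17767342073446134429853, 196870340445027187709073, -466573188067332086740294, 640350155573064701685677, -618528320697930479231708, 455945326061207576712813, -249221495641854819975424, 86935871846705425185477, -2135034702279876845240, -13163324196274593187852, -826562331185983744572, 13112058356797171412101, -14407714997560844833428, 9321727365619752620185, -4209803875791528106589, 1360347346208446034200, -299760215926957702122, 32647548704875097818, 5625302325012291687, -3978451717571218112, 1231380022029397421, -289314606013809886, 56391891563991997, -9150322820545179, 1205981948534325, -120738410760090, 10817087827595],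
  [-13580342013816387366998, -15914181328956674649775, 64140844182455672694113, 43025994372534741366518, -247757388054738618982631, 640350155573064701685677, -972575716895452795147172, 966541018605175110477752, -699148623477133190411265, 351704536212435203050627, -77891075576078722617646, -59713618058726595624045, 69806026333436315639660, -25027100966930599185175, -13138925378558057077202, 23785350111798855664655, -17278865299093641241646, 8269001593492166731565, -2811849526237522831864, 670159719764914619020, -90573095235514043123, -7202409985441375199, 8828025794847345178, -3276359347195270659, 862423429027891430, -175444412787780181, 28370911131161968, -3722865395540245, 418202925908627, -41779791223402],
  [16555536779506779279684, 56212534888109806689393, 37498704593696527697253, -152757096955821501833217, 248926936922362247617601, -618528320697930479231708, 966541018605175110477752, -899682892734516530015180, 535710207293269755277982, -120291704627710924792950, -169196752040671274765539, 265730085369471314477167, -196534600893732817023163, 73503944842645948510974, 12939883145081232214762, -38766194974853400880868, 29658330849994643490153, -14464425013713762567292, 4991066802115806954694, -1211554702068382485108, 168427917897389978896, 12872451952604228797, -16874506397239896392, 6419786462612699478, -1699487535084078548, 341933736441106606, -54309120298890166, 7094984050625809, -832379632222432, 85416447990304],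
  [-17835491163561685209907, -73264977331487216528537, -154521539065427581971379, 245052453897676312878972, -198922275098925048009700, 455945326061207576712813, -699148623477133190411265, 535710207293269755277982, -144986127141363181605534, -219717331436419054517913, 419814995719276980110094, -410385090138515395103906, 240215343466391377130543, -47380849409814129343196, -65180648935011767927071, 83969023487843497639536, -56498714564833070317152, 26392788397609832637719, -9018020867741222245562, 2217075302008813495221, -325908144568430277577, -14977733340875135599, 28210249146882995504, -11001183535066956253, 2899547509470804049, -574906938544935638, 90138809191797887, -11806366941041330, 1416152498620749, -145202643653551],
  [11628308732512904300916, 64385569010735434974444, 248051441742114243539321, -288484819265777987655066, 122031673417369953548936, -249221495641854819975424, 351704536212435203050627, -120291704627710924792950, -219717331436419054517913, 459616687744302690587666, -530116562979830801924485, 415809773790659579239584, -177483609140491275743435, -42286228506361099062841, 146640722344568375691140, -139366012801463145138457, 85982720194740960026308, -38846858813403081469376, 13156458027665113542445, -3262770271061946927083, 500288583845374928124, 11085905681677524949, -37715373263309322537, 15058792204328193153, -3963764060201916099, 779417375074768239, -121423693119652742, 15926092377056874, -1919564145795234, 194465294823989],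
  [896970160227370183782, -48765213207365899918239, -293475163595132534595118, 289857441391693012511692, -59053575718703997134754, 86935871846705425185477, -77891075576078722617646, -169196752040671274765539, 419814995719276980110094, -530116562979830801924485, 495175711774425661353282, -323613662995628517082403, 74564883198794052150023, 126802187360885977285966, -202742032848847826927341, 170454874530450655800136, -100542796534572059862180, 44607251962113254883879, -15045869810225417979651, 3756180164901385625892, -591699878709585914425, -4602130194245352185, 40651013155660286767, -16532450171888069781, 4353759778511981303, -852416187804843322, 132306302861315866, -17327191457875964, 2079831248144587, -207516233272824],
  [-12318045314878347451300, 37112784493220925734920, 280513399548914529620231, -258800533268654888245192, 26690307514797639122765, -2135034702279876845240, -59713618058726595624045, 265730085369471314477167, -410385090138515395103906, 415809773790659579239584, -323613662995628517082403, 156683461942343078884542, 42014372915471065251624, -183955989385626240720447, 218716140122138665309801, -169060445127489457022934, 96297325725750145804799, -42074558356454672870119, 14124285605797511920750, -3535200020429793486526, 564619970793818770516, 320529194381415158, -36919828819258363218, 15168145964551674951, -3992649512708235079, 779225286688016926, -120584670267961433, 15745209520239617, -1875258786290020, 183941584009228],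
  [16983385206082001005603, -28824103339872580405579, -222600298115483579678235, 201989999811156747573602, -17492629539247259999746, -13163324196274593187852, 69806026333436315639660, -196534600893732817023163, 240215343466391377130543, -177483609140491275743435, 74564883198794052150023, 42014372915471065251624, -153634794911661899788348, 215789126685823828054941, -206076317825286627289242, 146302016237245382799224, -80063853531649846685375, 34290308769877951604039, -11406196025193412917294, 2847203025623679041800, -456238053247206671347, 876177916169898516, 29280345186691145982, -12057087956596172060, 3166488877762225782, -616040161992805379, 95085378773953434, -12383414797123532, 1462789036299137, -140811501503233],
  [-15000481268156001151569, 20561536357068988003956, 148509846008933437980382, -134458332369504799254855, 15261275574931285160597, -826562331185983744572, -25027100966930599185175, 73503944842645948510974, -47380849409814129343196, -42286228506361099062841, 126802187360885977285966, -183955989385626240720447, 215789126685823828054941, -212712314921719469923896, 172650968971349218112278, -112894996109880224252519, 59099556749842374628890, -24691033318899652861377, 8101801097194669683666, -2007594620876149520245, 320398463354598231742, -533783833405469881, -20532649142063449417, 8428045741994948451, -2205163853706157442, 427663295927112240, -65887013734499357, 8571356571330826, -1005573635880973, 94899710590540],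
  [10054898728210361704133, -12361752078478293739239, -83869586777522102207720, 74685382260932534345168, -11720337271193250124337, 13112058356797171412101, -13138925378558057077202, 12939883145081232214762, -65180648935011767927071, 146640722344568375691140, -202742032848847826927341, 218716140122138665309801, -206076317825286627289242, 172650968971349218112278, -125597539984071620278434, 76686563061486677642392, -38483788071043586912342, 15662483103799165787481, -5057287105406937718691, 1240313394949771555871, -196241943570873489900, -10823414468430965, 12659993395393901937, -5163296610998685283, 1344777412034760664, -260018706250756715, 40017525779347280, -5207970301894768, 607851627328254, -56245295092950],
  [-5411067212514263367871, 6174643434075626775331, 40328255432909845305624, -34410659933989376995731, 7207942798160366758113, -14407714997560844833428, 23785350111798855664655, -38766194974853400880868, 83969023487843497639536, -139366012801463145138457, 170454874530450655800136, -169060445127489457022934, 146302016237245382799224, -112894996109880224252519, 76686563061486677642392, -44530208159313681250324, 21584643913033467499377, -8580325320924879084701, 2727251444229635825102, -661434144948850865183, 103533509488900512032, 253051018017847746, -6744484004440551589, 2729025430657911181, -707315674506180267, 136389720055674549, -20982649692347012, 2734001188760270, -317794145559984, 28850539354386],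
  [2385540420773470150111, -2553313082856815716055, -16497929930642831852763, 13023694082463739126118, -3401842865065808101925, 9321727365619752620185, -17278865299093641241646, 29658330849994643490153, -56498714564833070317152, 85982720194740960026308, -100542796534572059862180, 96297325725750145804799, -80063853531649846685375, 59099556749842374628890, -38483788071043586912342, 21584643913033467499377, -10190564263102131009510, 3973295157056789314401, -1245408782728309330415, 298800966332955888256, -46233668490301603304, -240529670246640236, 3046065103623485598, -1221851225791273900, 315092875852148030, -60602467063359206, 9322598362810793, -1216372626174589, 140856402450126, -12556429837110],
  [-859121893230538004674, 888650424381138733886, 5689723749853257489739, -3971017059200128956424, 1187588579128658333939, -4209803875791528106589, 8269001593492166731565, -14464425013713762567292, 26392788397609832637719, -38846858813403081469376, 44607251962113254883879, -42074558356454672870119, 34290308769877951604039, -24691033318899652861377, 15662483103799165787481, -8580325320924879084701, 3973295157056789314401, -1525638797892099237002, 472565110173465847629, -112252059467255393981, 17165034585055833636, 140923327600784085, -1144973924425413723, 455054076013789670, -116739522880334986, 22396355295517506, -3445597136642930, 450183071045038, -51926668699865, 4545234049061],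
  [246083589544448124787, -261349300308899442417, -1612345586229411601319, 924811556265330605595, -268862757126181287936, 1360347346208446034200, -2811849526237522831864, 4991066802115806954694, -9018020867741222245562, 13156458027665113542445, -15045869810225417979651, 14124285605797511920750, -11406196025193412917294, 8101801097194669683666, -5057287105406937718691, 2727251444229635825102, -1245408782728309330415, 472565110173465847629, -144945825787528633894, 34124292555796970453, -5159099278760520581, -57724615436598785, 348179217160123290, -137095037538673421, 34981950580670417, -6694696687601015, 1030347579072790, -134860860328846, 15491803290194, -1330185760603],
  [-51788042220765587870, 66084212097037552292, 352412123290268484562, -135422752183758733879, 14712186441353005811, -299760215926957702122, 670159719764914619020, -1211554702068382485108, 2217075302008813495221, -3262770271061946927083, 3756180164901385625892, -3535200020429793486526, 2847203025623679041800, -2007594620876149520245, 1240313394949771555871, -661434144948850865183, 298800966332955888256, -112252059467255393981, 34124292555796970453, -7963145631764535080, 1189314294676678800, 17205810693559292, -81242956716880141, 31650395856069468, -8024738484862589, 1531579048078632, -235991053363466, 30998148047779, -3545227505725, 297263296640],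
  [5639851985328560585, -15382611935656587050, -47269921374343559708, -2638047981670389592, 15576388995201762123, 32647548704875097818, -90573095235514043123, 168427917897389978896, -325908144568430277577, 500288583845374928124, -591699878709585914425, 564619970793818770516, -456238053247206671347, 320398463354598231742, -196241943570873489900, 103533509488900512032, -46233668490301603304, 17165034585055833636, -5159099278760520581, 1189314294676678800, -174555141694658140, -3275943553072802, 12057453688495462, -4618428256386927, 1157901301706114, -220103913006007, 34077179753017, -4529024688878, 515032484122, -41252883402],
  [1011442517896092611, 3761178758703594899, -2759409441640760153, 8717468031809517083, -6684112423214667234, 5625302325012291687, -7202409985441375199, 12872451952604228797, -14977733340875135599, 11085905681677524949, -4602130194245352185, 320529194381415158, 876177916169898516, -533783833405469881, -10823414468430965, 253051018017847746, -240529670246640236, 140923327600784085, -57724615436598785, 17205810693559292, -3275943553072802, 51219415906016, 252409376542984, -120257816425407, 34769998339938, -6855919681030, 961277459845, -98120784410, 11860340866, -1703285484],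
  [-742762847945169011, -1053268886848037236, 4035580718189387341, -3005515302275664178, 1216184313244381630, -3978451717571218112, 8828025794847345178, -16874506397239896392, 28210249146882995504, -37715373263309322537, 40651013155660286767, -36919828819258363218, 29280345186691145982, -20532649142063449417, 12659993395393901937, -6744484004440551589, 3046065103623485598, -1144973924425413723, 348179217160123290, -81242956716880141, 12057453688495462, 252409376542984, -873333807337564, 340932195319248, -87064239277996, 16617883317939, -2526213771755, 322415309893, -36848996805, 3242374367],
  [232742627827221591, 301176818756449076, -1443295105012749105, 620782701392123302, 21226991994239079, 1231380022029397421, -3276359347195270659, 6419786462612699478, -11001183535066956253, 15058792204328193153, -16532450171888069781, 15168145964551674951, -12057087956596172060, 8428045741994948451, -5163296610998685283, 2729025430657911181, -1221851225791273900, 455054076013789670, -137095037538673421, 31650395856069468, -4618428256386927, -120257816425407, 340932195319248, -131158717985446, 33212296609764, -6323683924887, 965495529805, -124507288820, 14188801612, -1211199199],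
  [-51833569444121734, -73523649942320612, 344125090260108982, -83779617962359026, -71148779326243771, -289314606013809886, 862423429027891430, -1699487535084078548, 2899547509470804049, -3963764060201916099, 4353759778511981303, -3992649512708235079, 3166488877762225782, -2205163853706157442, 1344777412034760664, -707315674506180267, 315092875852148030, -116739522880334986, 34981950580670417, -8024738484862589, 1157901301706114, 34769998339938, -87064239277996, 33212296609764, -8376461645512, 1593631442544, -243873163362, 31596560508, -3597192098, 303346605],
  [9225620016685325, 14454760536550196, -61516029675137841, 6413066908843936, 20735777373215876, 56391891563991997, -175444412787780181, 341933736441106606, -574906938544935638, 779417375074768239, -852416187804843322, 779225286688016926, -616040161992805379, 427663295927112240, -260018706250756715, 136389720055674549, -60602467063359206, 22396355295517506, -6694696687601015, 1531579048078632, -220103913006007, -6855919681030, 16617883317939, -6323683924887, 1593631442544, -303408375992, 46531908867, -6047757246, 688635870, -57822297],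
  [-1418865649144889, -2374568323294330, 8681097114430343, 264781139529399, -3918678470481810, -9150322820545179, 28370911131161968, -54309120298890166, 90138809191797887, -121423693119652742, 132306302861315866, -120584670267961433, 95085378773953434, -65887013734499357, 40017525779347280, -20982649692347012, 9322598362810793, -3445597136642930, 1030347579072790, -235991053363466, 34077179753017, 961277459845, -2526213771755, 965495529805, -243873163362, 46531908867, -7154237718, 932415419, -106311197, 8926936],
  [194000680692627, 335039341326586, -1029745217083334, -209472510002068, 616033938896102, 1205981948534325, -3722865395540245, 7094984050625809, -11806366941041330, 15926092377056874, -17327191457875964, 15745209520239617, -12383414797123532, 8571356571330826, -5207970301894768, 2734001188760270, -1216372626174589, 450183071045038, -134860860328846, 30998148047779, -4529024688878, -98120784410, 322415309893, -124507288820, 31596560508, -6047757246, 932415419, -121914618, 13948519, -1174263],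
  [-23314026302203, -43340268097515, 107588512622819, 55534303986889, -98888112212189, -120738410760090, 418202925908627, -832379632222432, 1416152498620749, -1919564145795234, 2079831248144587, -1875258786290020, 1462789036299137, -1005573635880973, 607851627328254, -317794145559984, 140856402450126, -51926668699865, 15491803290194, -3545227505725, 515032484122, 11860340866, -36848996805, 14188801612, -3597192098, 688635870, -106311197, 13948519, -1601500, 134785],
  [1787103092631, 3041441100866, -9597698777823, -9040960933272, 11850321660431, 10817087827595, -41779791223402, 85416447990304, -145202643653551, 194465294823989, -207516233272824, 183941584009228, -140811501503233, 94899710590540, -56245295092950, 28850539354386, -12556429837110, 4545234049061, -1330185760603, 297263296640, -41252883402, -1703285484, 3242374367, -1211199199, 303346605, -57822297, 8926936, -1174263, 134785, -11188]]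
namespace PGLid
open Polynomial

def qs : List ℤ := qc ++ [1]
def Bz : ℤ := 2 ^ 5000
set_option maxRecDepth 100000
set_option exponentiation.threshold 10000
theorem chk : (big 29 Bz (ev lc Bz) (rc.map (fun row => ev row Bz)) lc qs).all
    (fun t => t % ev qs Bz == 0) = true := by decide +kernel
theorem chk6 : (pre 29 Bz (ev lc Bz) (rc.map (fun row => ev row Bz)) lc).length = 60 := by decide +kernel
theorem chk7 : ((2 ^ 4990 : ℕ) : ℤ) * (∑ i ∈ Finset.range 30, Bz ^ i) < ev qs Bz := by
  decide +kernel
theorem chk2 : (rc.map (fun r => (ev (r.map Int.natAbs) w))).all (fun n => Nat.ble n (2 ^ (42 * 29 + 90))) = true := by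
  decide +kernel
theorem chk3 : Nat.ble (ev (lc.map Int.natAbs) w) (2 ^ (42 * 29 + 130)) = true := by
  decide +kernel
theorem chk4 : qs.all (fun c => Nat.ble (c.natAbs + 1) (2 ^ 37)) = true := by
  decide +kernel
theorem chk5 : lc.all (fun c => Nat.ble c.natAbs (2 ^ 130)) = true := by
  decide +kernel

noncomputable def qR : ℤ[X] := ev (cz ℤ[X] qs) X
noncomputable def rR : List ℤ[X] := rc.map (fun row => ev (cz ℤ[X] row) X)

lemma coeff_ev (l : List ℤ) : ∀ i, (ev (cz ℤ[X] l) X).coeff i = l.getD i 0 := by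
  induction l with
  | nil => intro i; simp [cz]
  | cons c l ih =>
    intro i
    have : ev (cz ℤ[X] (c :: l)) X = C c + X * ev (cz ℤ[X] l) X := by simp [cz]
    rw [this]
    cases i with
    | zero => simp
    | succ i => rw [coeff_add, coeff_C_succ, coeff_X_mul, ih]; simp

lemma cz_id (l : List ℤ) : cz ℤ l = l := by
  have : (Int.castRingHom ℤ : ℤ → ℤ) = id := by ext; simp
  rw [cz, this, List.map_id]

lemma len_qs : qs.length = 31 := by decide +kernel

lemma qR30 : qR.coeff 30 = 1 := by
  rw [qR, coeff_ev]; decide +kernel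

lemma qRhi (i : ℕ) (h : 30 < i) : qR.coeff i = 0 := by
  rw [qR, coeff_ev, List.getD_eq_default]; rw [len_qs]; omega

lemma qRw (i : ℕ) : |qR.coeff i| + 1 ≤ w := by
  rw [qR, coeff_ev, List.getD]
  cases hi : qs[i]? with
  | none => simp [w]
  | some c =>
    have h := List.all_eq_true.mp chk4 c (List.mem_of_getElem? hi)
    have h := Nat.le_of_ble_eq_true h
    simp only [Option.getD_some]
    have e : |c| = (c.natAbs : ℤ) := by simp
    rw [e]
    have : c.natAbs + 1 ≤ w := h.trans (by norm_num [w])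
    exact_mod_cast this

lemma eval_ev (l : List ℤ) (b : ℤ) : (ev (cz ℤ[X] l) X).eval b = ev l b := by
  have := map_ev (evalRingHom b) (cz ℤ[X] l) X
  rw [map_cz, cz_id] at this
  simpa using this

lemma map_rR {S : Type*} [CommRing S] (f : ℤ[X] →+* S) :
    rR.map f = rc.map (fun row => ev (cz S row) (f X)) := by
  rw [rR, List.map_map]
  refine List.map_congr_left fun row _ => ?_
  simp only [Function.comp_apply]
  rw [map_ev, map_cz]

lemma pre_map : (pre 29 X (ev (cz ℤ[X] lc) X) rR (cz ℤ[X] lc)).map (evalRingHom Bz) =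
    pre 29 Bz (ev lc Bz) (rc.map (fun row => ev row Bz)) lc := by
  rw [map_pre, map_rR, map_cz, map_ev, map_cz]
  simp [cz_id]

lemma big_map : (big 29 X (ev (cz ℤ[X] lc) X) rR (cz ℤ[X] lc) (cz ℤ[X] qs)).map (evalRingHom Bz) =
    big 29 Bz (ev lc Bz) (rc.map (fun row => ev row Bz)) lc qs := by
  rw [big, map_red, pre_map, map_cz, cz_id]; rfl

lemma big_bd : AB (big 29 X (ev (cz ℤ[X] lc) X) rR (cz ℤ[X] lc) (cz ℤ[X] qs)) (2 ^ 4990) := by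
  have hq : AB (cz ℤ[X] qs) (2 ^ 37) := ab_cz _ _ fun c hc => by
    have h := Nat.le_of_ble_eq_true (List.all_eq_true.mp chk4 c hc)
    omega
  have hl : AB (cz ℤ[X] lc) (2 ^ 130) := ab_cz _ _ fun c hc =>
    Nat.le_of_ble_eq_true (List.all_eq_true.mp chk5 c hc)
  have hly : Bd (ev (cz ℤ[X] lc) X) (2 ^ (42 * 29 + 130)) :=
    (bd_ev lc).mono (Nat.le_of_ble_eq_true chk3)
  have hr : AB rR (2 ^ (42 * 29 + 90)) := by
    intro t ht
    obtain ⟨row, hrow, rfl⟩ := List.mem_map.mp ht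
    refine (bd_ev row).mono ?_
    exact Nat.le_of_ble_eq_true (List.all_eq_true.mp chk2 _ (List.mem_map.mpr ⟨row, hrow, rfl⟩))
  have h29 : Bd (29 : ℤ[X]) 29 := by simpa using Bd.int 29
  have hlen : rR.length = 30 := by rw [rR, List.length_map]; decide +kernel
  have he := AB.axpy hly.neg hl (AB.axpy h29 (AB.mulL hr hr) (AB.nil 0))
  have hp := AB.axpy Bd.X.neg he (AB.cons (Bd.zero.mono (Nat.zero_le _)) he)
  have hlen2 : (pre 29 X (ev (cz ℤ[X] lc) X) rR (cz ℤ[X] lc)).length = 60 := by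
    rw [← chk6, ← pre_map, List.length_map]
  have := AB.red hq hp
  refine AB.mono this ?_
  have e : (axpy (-X) (axpy (-(ev (cz ℤ[X] lc) X)) (cz ℤ[X] lc) (axpy 29 (mulL rR rR) []))
    (0 :: (axpy (-(ev (cz ℤ[X] lc) X)) (cz ℤ[X] lc) (axpy 29 (mulL rR rR) [])))).length = 60 := hlen2
  rw [e, hlen]
  apply Nat.le_of_ble_eq_true
  decide +kernel

lemma qR_dvd : ∀ t ∈ big 29 X (ev (cz ℤ[X] lc) X) rR (cz ℤ[X] lc) (cz ℤ[X] qs), qR ∣ t := by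
  intro t ht
  have hn : (((2 ^ 4990 : ℕ) : ℤ)) < Bz := by
    decide +kernel
  have hqe : qR.eval Bz = ev qs Bz := eval_ev qs Bz
  refine ((big_bd t ht).rm qR30 qRhi qRw).dvd hn ?_ ?_
  · rw [hqe]
    exact chk7
  · rw [hqe]
    have h := List.all_eq_true.mp chk (t.eval Bz) (by
      rw [← big_map]; exact List.mem_map.mpr ⟨t, ht, rfl⟩)
    exact Int.dvd_of_emod_eq_zero (by simpa using h)

/-- The main algebraic identity. -/
theorem main_id {S : Type*} [CommRing S] (x y : S) (hx : ev (cz S qs) x = 0) (hy : ev (cz S qs) y = 0) :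
    (x - y) * (29 * (ev (rc.map (fun row => ev (cz S row) y)) x) ^ 2
      - ev (cz S lc) y * ev (cz S lc) x) = 0 := by
  let f : ℤ[X] →+* S := eval₂RingHom (Int.castRingHom S) y
  have fX : f X = y := by simp [f]
  have h1 : (big 29 X (ev (cz ℤ[X] lc) X) rR (cz ℤ[X] lc) (cz ℤ[X] qs)).map f =
     big 29 y (ev (cz S lc) y) (rc.map (fun row => ev (cz S row) y)) (cz S lc) (cz S qs) := by
    rw [map_big, map_rR, map_cz, map_cz, map_ev, map_cz, fX, map_ofNat]
  rw [← ev_big _ _ _ _ _ _ _ hx, ← h1]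
  have h2 : ∀ t ∈ (big 29 X (ev (cz ℤ[X] lc) X) rR (cz ℤ[X] lc) (cz ℤ[X] qs)).map f, t = 0 := by
    intro t ht
    obtain ⟨s, hs, rfl⟩ := List.mem_map.mp ht
    obtain ⟨u, rfl⟩ := qR_dvd s hs
    rw [map_mul, qR, map_ev, map_cz, fX, hy, zero_mul]
  generalize (big 29 X (ev (cz ℤ[X] lc) X) rR (cz ℤ[X] lc) (cz ℤ[X] qs)).map f = l at h2
  induction l with
  | nil => rfl
  | cons c l ih =>
    rw [ev_cons, h2 c (by simp), ih fun t ht => h2 t (by simp [ht])]; simp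

end PGLid
namespace PGLcore

scoped instance fact29 : Fact (Nat.Prime 29) := ⟨by norm_num⟩

abbrev K := ZMod 29
abbrev P := OnePoint (ZMod 29)

/-- representing vectors -/
def v0 : P → K := fun i => Option.elim i 1 id
def v1 : P → K := fun i => Option.elim i 0 (fun _ => 1)

@[simp] lemma v0_inf : v0 OnePoint.infty = 1 := rfl
@[simp] lemma v1_inf : v1 OnePoint.infty = 0 := rfl
@[simp] lemma v0_coe (k : K) : v0 (k : P) = k := rfl
@[simp] lemma v1_coe (k : K) : v1 (k : P) = 1 := rfl

def dd (i j : P) : K := v0 i * v1 j - v1 i * v0 j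

lemma dd_self (i : P) : dd i i = 0 := by unfold dd; ring

lemma eq_of_dd {i j : P} (h : dd i j = 0) : i = j := by
  induction i using OnePoint.rec <;> induction j using OnePoint.rec <;> simp [dd] at h ⊢
  exact sub_eq_zero.mp h

lemma dd_ne {i j : P} (h : i ≠ j) : dd i j ≠ 0 := fun h' => h (eq_of_dd h')

/-- quadratic character -/
abbrev χ : K → ℤ := fun a => quadraticChar (ZMod 29) a

lemma χ_mul (a b : K) : χ (a * b) = χ a * χ b := map_mul _ a b
lemma χ_sq {a : K} (h : a ≠ 0) : χ a * χ a = 1 := by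
  rw [← χ_mul, ← sq]; exact quadraticChar_sq_one' h
lemma χ_or {a : K} (h : a ≠ 0) : χ a = 1 ∨ χ a = -1 := quadraticChar_dichotomy h

def cc (i j : P) : ℤ := χ (dd i j)

def ee (i j k : P) : ℤ := cc i j * cc j k * cc k i

lemma smul_spec (g : GL (Fin 2) K) (i : P) : ∃ s : K, s ≠ 0 ∧
    g 0 0 * v0 i + g 0 1 * v1 i = s * v0 (g • i) ∧ g 1 0 * v0 i + g 1 1 * v1 i = s * v1 (g • i) := by
  have hd : g 0 0 * g 1 1 - g 0 1 * g 1 0 ≠ 0 := by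
    have := g.det_ne_zero
    rwa [det_fin_two] at this
  induction i using OnePoint.rec with
  | infty =>
    rw [OnePoint.smul_infty_eq_ite]
    split_ifs with h
    · refine ⟨g 0 0, ?_, by simp, by simp [h]⟩
      rintro h'; simp [h, h'] at hd
    · refine ⟨g 1 0, h, by simp; field_simp, by simp⟩
  | coe k =>
    rw [OnePoint.smul_some_eq_ite]
    split_ifs with h
    · refine ⟨g 0 0 * k + g 0 1, ?_, by simp, by simp [h]⟩
      intro h'
      apply hd
      have h2 : (g 0 0 * g 1 1 - g 0 1 * g 1 0) = g 0 0 * (g 1 0 * k + g 1 1) - g 1 0 * (g 0 0 * k + g 0 1) := by ring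
      rw [h2, h, h']; ring
    · refine ⟨g 1 0 * k + g 1 1, h, ?_, by simp⟩
      simp only [v0_coe, v1_coe, mul_one]
      rw [mul_comm (g 1 0 * k + g 1 1), div_mul_cancel₀ _ h]

lemma smul_eq_of (g : GL (Fin 2) K) (i j : P) (s : K)
    (h0 : g 0 0 * v0 i + g 0 1 * v1 i = s * v0 j)
    (h1 : g 1 0 * v0 i + g 1 1 * v1 i = s * v1 j) : g • i = j := by
  obtain ⟨t, ht, e0, e1⟩ := smul_spec g i
  rw [e0] at h0; rw [e1] at h1
  apply eq_of_dd
  have : t * dd (g • i) j = 0 := by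
    unfold dd
    linear_combination v1 j * h0 - v0 j * h1
  simpa [ht] using this

lemma dd_smul (g : GL (Fin 2) K) : ∃ s : P → K, (∀ i, s i ≠ 0) ∧
    ∀ i j, g.val.det * dd i j = s i * s j * dd (g • i) (g • j) := by
  choose s hs h0 h1 using smul_spec g
  refine ⟨s, hs, fun i j => ?_⟩
  rw [det_fin_two]
  unfold dd
  linear_combination (v1 j * g 1 1 + v0 j * g 1 0) * h0 i - (v1 j * g 0 1 + v0 j * g 0 0) * h1 i
    + s i * v0 (g • i) * h1 j - s i * v1 (g • i) * h0 j

lemma ee_smul (g : GL (Fin 2) K) (i j k : P) :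
    ee (g • i) (g • j) (g • k) = χ g.val.det * ee i j k := by
  obtain ⟨s, hs, h⟩ := dd_smul g
  have hd : χ g.val.det * χ g.val.det = 1 := χ_sq g.det_ne_zero
  have key : ∀ i j, cc (g • i) (g • j) = χ (s i) * χ (s j) * χ g.val.det * cc i j := by
    intro i j
    have := congrArg χ (h i j)
    simp only [χ_mul] at this
    unfold cc
    have a := χ_sq (hs i)
    have b := χ_sq (hs j)
    linear_combination (- χ (s i) * χ (s j)) * this - χ (dd (g • i) (g • j)) * (χ (s i))^2 * b
      - χ (dd (g • i) (g • j)) * a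
  unfold ee
  rw [key, key, key]
  have a := χ_sq (hs i)
  have b := χ_sq (hs j)
  have c := χ_sq (hs k)
  calc _ = (χ (s i) * χ (s i)) * (χ (s j) * χ (s j)) * (χ (s k) * χ (s k)) * (χ g.val.det * χ g.val.det) * χ g.val.det
      * (cc i j * cc j k * cc k i) := by ring
    _ = _ := by rw [a, b, c, hd]; ring

def mkGL (a b c d : K) (h : a * d - b * c ≠ 0) : GL (Fin 2) K :=
  GeneralLinearGroup.mkOfDetNeZero !![a, b; c, d] (by rwa [det_fin_two_of])

@[simp] lemma mkGL_val (a b c d : K) (h) : (mkGL a b c d h).val = !![a, b; c, d] := rfl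
@[simp] lemma mkGL_00 (a b c d : K) (h) : (mkGL a b c d h) 0 0 = a := rfl
@[simp] lemma mkGL_01 (a b c d : K) (h) : (mkGL a b c d h) 0 1 = b := rfl
@[simp] lemma mkGL_10 (a b c d : K) (h) : (mkGL a b c d h) 1 0 = c := rfl
@[simp] lemma mkGL_11 (a b c d : K) (h) : (mkGL a b c d h) 1 1 = d := rfl

lemma trans3 (p q r : P) (hpq : p ≠ q) (hpr : p ≠ r) (hqr : q ≠ r) :
    ∃ g : GL (Fin 2) K, g • (OnePoint.infty : P) = p ∧ g • ((0 : K) : P) = q ∧ g • ((1 : K) : P) = r := by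
  have h1 := dd_ne hpq
  have h2 := dd_ne hpr
  have h3 := dd_ne hqr
  refine ⟨mkGL (-dd q r * v0 p) (dd p r * v0 q) (-dd q r * v1 p) (dd p r * v1 q) ?_, ?_, ?_, ?_⟩
  · have : -dd q r * v0 p * (dd p r * v1 q) - dd p r * v0 q * (-dd q r * v1 p)
      = - (dd q r * dd p r * dd p q) := by unfold dd; ring
    rw [this]
    simp [h1, h2, h3]
  · apply smul_eq_of _ _ _ (-dd q r) <;> simp
  · apply smul_eq_of _ _ _ (dd p r) <;> simp
  · apply smul_eq_of _ _ _ (dd p q) <;> simp <;> unfold dd <;> ring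

/-- refinement -/
def refine (f : K → ℕ) (i : K) : ℕ := ∑ j : K, if χ (i - j) = 1 then f j ^ 2 else 0

def sqs : Finset K := {1, 4, 9, 16, 25, 7, 20, 6, 23, 13, 5, 28, 24, 22}

lemma χ_sqs (a : K) : χ a = 1 ↔ a ∈ sqs := by
  by_cases h : a = 0
  · subst h; simp [χ]; decide
  · rw [show χ a = quadraticChar (ZMod 29) a from rfl, quadraticChar_one_iff_isSquare h]
    revert a
    decide +kernel

def refine' (f : K → ℕ) (i : K) : ℕ := ∑ j : K, if (i - j) ∈ sqs then f j ^ 2 else 0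

lemma refine_eq (f) : refine f = refine' f := by
  funext i; unfold refine refine'; simp only [χ_sqs]

lemma refine_inv (τ : Equiv.Perm K) (hτ : ∀ i j, χ (τ i - τ j) = χ (i - j)) (f : K → ℕ)
    (hf : ∀ i, f (τ i) = f i) (i : K) : refine f (τ i) = refine f i := by
  unfold refine
  rw [← Equiv.sum_comp τ]
  simp [hτ, hf]

def f0 (i : K) : ℕ := if i = 0 then 1 else if i = 1 then 2 else 0

def tab (f : K → ℕ) : List ℕ := List.ofFn (n := 29) (fun i => f ((i.val : ℕ) : K))
def oftab (l : List ℕ) (i : K) : ℕ := l.getD i.val 0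

lemma refine_inj : Function.Injective (refine' (refine' (refine' (refine' f0)))) := by
  have h : ∀ f, oftab (tab f) = f := by
    intro f; funext i
    simp only [oftab, tab]
    rw [List.getD_eq_getElem _ _ (by simpa using ZMod.val_lt i), List.getElem_ofFn]
    simp
  have e : refine' (refine' (refine' (refine' f0))) =
    oftab (tab (refine' (oftab (tab (refine' (oftab (tab (refine' (oftab (tab (refine' f0))))))))))) := by
    simp only [h]
  rw [e]
  decide +kernel

lemma rigid (τ : Equiv.Perm K) (hτ : ∀ i j, χ (τ i - τ j) = χ (i - j)) (h0 : τ 0 = 0) (h1 : τ 1 = 1) :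
    τ = 1 := by
  have hf0 : ∀ i, f0 (τ i) = f0 i := by
    intro i
    have a : τ i = 0 ↔ i = 0 := ⟨fun h => τ.injective (h.trans h0.symm), fun h => h ▸ h0⟩
    have b : τ i = 1 ↔ i = 1 := ⟨fun h => τ.injective (h.trans h1.symm), fun h => h ▸ h1⟩
    simp [f0, a, b]
  have h := refine_inv τ hτ _ (refine_inv τ hτ _ (refine_inv τ hτ _ (refine_inv τ hτ _ hf0)))
  simp only [refine_eq] at h
  ext1 i
  exact refine_inj (h i)

def Good (σ : Equiv.Perm P) (δ : ℤ) : Prop :=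
  ∀ i j k, i ≠ j → j ≠ k → k ≠ i → ee (σ i) (σ j) (σ k) = δ * ee i j k

abbrev pp : GL (Fin 2) K →* Equiv.Perm P := MulAction.toPermHom _ _

lemma rigidP (σ : Equiv.Perm P) (δ : ℤ) (h : Good σ δ) (hi : σ OnePoint.infty = OnePoint.infty)
    (h0 : σ ((0 : K) : P) = ((0 : K) : P)) (h1 : σ ((1 : K) : P) = ((1 : K) : P)) : σ = 1 := by
  have hδ : δ = 1 := by
    have := h OnePoint.infty ((0 : K) : P) ((1 : K) : P) (by simp) (by simp) (by simp)
    rw [hi, h0, h1] at this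
    have e : ee OnePoint.infty ((0 : K) : P) ((1 : K) : P) ≠ 0 := by
      have : ∀ i j : P, i ≠ j → cc i j ≠ 0 := by
        intro i j hij
        rcases χ_or (dd_ne hij) with h | h <;> simp [cc, h]
      unfold ee
      exact mul_ne_zero (mul_ne_zero (this _ _ (by simp)) (this _ _ (by simp))) (this _ _ (by simp))
    have : (δ - 1) * ee OnePoint.infty ((0 : K) : P) ((1 : K) : P) = 0 := by linarith
    rcases mul_eq_zero.mp this with h | h
    · linarith
    · exact absurd h e
  subst hδ
  have hfin : ∀ k : K, ∃ m : K, σ (k : P) = (m : P) := by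
    intro k
    have : σ (k : P) ≠ OnePoint.infty := by
      intro h
      have := σ.injective (h.trans hi.symm)
      simp at this
    obtain ⟨m, hm⟩ := OnePoint.ne_infty_iff_exists.mp this
    exact ⟨m, hm.symm⟩
  choose t ht using hfin
  have tinj : Function.Injective t := by
    intro a b hab
    have : σ (a : P) = σ (b : P) := by rw [ht, ht, hab]
    simpa using σ.injective this
  let τ : Equiv.Perm K := Equiv.ofBijective t (Finite.injective_iff_bijective.mp tinj)
  have hτ : ∀ i j, χ (τ i - τ j) = χ (i - j) := by
    intro i j
    by_cases hij : i = j
    · subst hij; simp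
    have := h OnePoint.infty (i : P) (j : P) (by simp) (by simpa using hij) (by simp)
    rw [hi, ht, ht] at this
    have hm : χ (-1) * χ (-1) = 1 := χ_sq (by simp)
    simp only [ee, cc, dd, v0_inf, v1_inf, v0_coe, v1_coe] at this
    simp only [mul_one, one_mul, zero_mul, sub_zero, mul_zero, zero_sub] at this
    have h1 : χ 1 = 1 := by simp [χ]
    rw [h1] at this
    simp only [one_mul] at this
    have h3 := congrArg (· * χ (-1)) this
    simp only [mul_assoc, hm, mul_one] at h3
    exact h3
  have hτ0 : τ 0 = 0 := by
    have := (ht 0).symm.trans h0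
    exact OnePoint.coe_injective this
  have hτ1 : τ 1 = 1 := by
    have := (ht 1).symm.trans h1
    exact OnePoint.coe_injective this
  have := rigid τ hτ hτ0 hτ1
  ext1 i
  induction i using OnePoint.rec with
  | infty => simpa using hi
  | coe k =>
    rw [ht]
    have h2 : τ k = k := by rw [this]; rfl
    simp only [Equiv.Perm.coe_one, id_eq]
    exact congrArg _ h2

lemma mem_range (σ : Equiv.Perm P) (δ : ℤ) (h : Good σ δ) : ∃ g, pp g = σ := by
  obtain ⟨g, gi, g0, g1⟩ := trans3 (σ OnePoint.infty) (σ ((0 : K) : P)) (σ ((1 : K) : P))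
    (by simp) (by simp) (by simp)
  refine ⟨g, ?_⟩
  have hgood : Good ((pp g)⁻¹ * σ) (χ g⁻¹.val.det * δ) := by
    intro i j k a b c
    rw [← map_inv]
    simp only [Equiv.Perm.mul_apply, MulAction.toPermHom_apply, MulAction.toPerm_apply]
    rw [ee_smul, h i j k a b c, mul_assoc]
  have := rigidP _ _ hgood (by rw [← map_inv]; simp [← gi]) (by rw [← map_inv]; simp [← g0])
    (by rw [← map_inv]; simp [← g1])
  exact (inv_mul_eq_one.mp this)

lemma ker_pp : pp.ker = Subgroup.center (GL (Fin 2) K) := by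
  ext g
  rw [MonoidHom.mem_ker, GeneralLinearGroup.mem_center_iff_val_mem_range_scalar]
  constructor
  · intro h
    have hs : ∀ i : P, g • i = i := fun i => by
      have := congrArg (fun σ => σ i) h
      simpa using this
    have a := hs OnePoint.infty
    rw [OnePoint.smul_infty_eq_self_iff] at a
    obtain ⟨s, hs0, e0, e1⟩ := smul_spec g ((0 : K) : P)
    obtain ⟨t, ht0, f0, f1⟩ := smul_spec g ((1 : K) : P)
    rw [hs] at e0 e1 f0 f1
    simp [a] at e0 e1 f0 f1
    rw [e0] at f0
    refine ⟨s, ?_⟩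
    ext i j
    fin_cases i <;> fin_cases j <;> simp [scalar_apply, a, e0, e1]
    rw [← e1, f1]; simpa using f0.symm
  · rintro ⟨s, hs⟩
    ext1 i
    simp only [MulAction.toPermHom_apply, MulAction.toPerm_apply, Equiv.Perm.coe_one, id_eq]
    apply smul_eq_of g i i s <;> rw [← hs] <;> simp [scalar_apply]

end PGLcore
namespace PGLcore

def UU (t : K) : GL (Fin 2) K := mkGL 1 t 0 1 (by simp)
def LO (t : K) : GL (Fin 2) K := mkGL 1 0 t 1 (by simp)
def SC (t : K) (h : t ≠ 0) : GL (Fin 2) K := mkGL t 0 0 t (by simpa using h)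

lemma gl_ext {g h : GL (Fin 2) K} (a : g 0 0 = h 0 0) (b : g 0 1 = h 0 1) (c : g 1 0 = h 1 0)
    (d : g 1 1 = h 1 1) : g = h := by
  apply Units.ext
  ext i j
  fin_cases i <;> fin_cases j <;> assumption

lemma mul00 (g h : GL (Fin 2) K) : (g * h) 0 0 = g 0 0 * h 0 0 + g 0 1 * h 1 0 := by
  simp [Matrix.mul_apply, Fin.sum_univ_two]
lemma mul01 (g h : GL (Fin 2) K) : (g * h) 0 1 = g 0 0 * h 0 1 + g 0 1 * h 1 1 := by
  simp [Matrix.mul_apply, Fin.sum_univ_two]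
lemma mul10 (g h : GL (Fin 2) K) : (g * h) 1 0 = g 1 0 * h 0 0 + g 1 1 * h 1 0 := by
  simp [Matrix.mul_apply, Fin.sum_univ_two]
lemma mul11 (g h : GL (Fin 2) K) : (g * h) 1 1 = g 1 0 * h 0 1 + g 1 1 * h 1 1 := by
  simp [Matrix.mul_apply, Fin.sum_univ_two]

lemma det_ne (g : GL (Fin 2) K) : g 0 0 * g 1 1 - g 0 1 * g 1 0 ≠ 0 := by
  have := g.det_ne_zero
  rwa [det_fin_two] at this

lemma UU_add (s t : K) : UU (s + t) = UU s * UU t := by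
  apply gl_ext <;> simp only [mul00, mul01, mul10, mul11] <;> simp [UU, add_comm]
lemma LO_add (s t : K) : LO (s + t) = LO s * LO t := by
  apply gl_ext <;> simp only [mul00, mul01, mul10, mul11] <;> simp [LO]

lemma UU_nat (n : ℕ) (t : K) : UU (n * t) = UU t ^ n := by
  induction n with
  | zero => apply gl_ext <;> simp [UU]
  | succ n ih => rw [pow_succ, ← ih, ← UU_add]; congr 1; push_cast; ring

lemma UU_all (H : Subgroup (GL (Fin 2) K)) (t : K) (ht : t ≠ 0) (h : UU t ∈ H) (s : K) : UU s ∈ H := by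
  have : UU s = UU t ^ (s / t).val := by
    rw [← UU_nat]; congr 1
    rw [ZMod.natCast_zmod_val]; field_simp
  rw [this]; exact H.pow_mem h _

lemma gen (H : Subgroup (GL (Fin 2) K)) (hs : ∀ t h, SC t h ∈ H)
    (A : GL (Fin 2) K) (hA : A ∈ H) (hA1 : A • (OnePoint.infty : P) = OnePoint.infty)
    (hA2 : ∀ k : K, A • (k : P) ≠ (k : P))
    (B : GL (Fin 2) K) (hB : B ∈ H) (hB1 : B • (OnePoint.infty : P) ≠ OnePoint.infty)
    (C : GL (Fin 2) K) (hC : C ∈ H) (hC1 : χ C.val.det = -1) : H = ⊤ := by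
  -- unipotent
  have hc := OnePoint.smul_infty_eq_self_iff.mp hA1
  have hd := det_ne A
  have hU : ∀ s, UU s ∈ H := by
    have ha : A 0 0 ≠ 0 := by intro h; simp [h, hc] at hd
    have hd1 : A 1 1 ≠ 0 := by intro h; simp [h, hc] at hd
    have had : A 0 0 = A 1 1 := by
      by_contra hne
      have hne' : A 1 1 - A 0 0 ≠ 0 := fun h => hne (sub_eq_zero.mp h).symm
      refine hA2 (A 0 1 / (A 1 1 - A 0 0)) ?_
      apply smul_eq_of _ _ _ (A 1 1)
      · simp only [v0_coe, v1_coe]; field_simp; ring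
      · simp [hc]
    have hb : A 0 1 ≠ 0 := by
      intro hb
      refine hA2 0 ?_
      apply smul_eq_of _ _ _ (A 1 1) <;> simp [hb]
    have : UU (A 0 1 / A 0 0) ∈ H := by
      have e : UU (A 0 1 / A 0 0) = SC (A 0 0)⁻¹ (inv_ne_zero ha) * A := by
        apply gl_ext <;> simp only [mul00, mul01, mul10, mul11] <;> simp [UU, SC, hc]
        · field_simp
        · field_simp
        · rw [← had]; field_simp
      rw [e]; exact H.mul_mem (hs _ _) hA
    exact UU_all H _ (div_ne_zero hb ha) this
  have hBc : B 1 0 ≠ 0 := fun h => hB1 (OnePoint.smul_infty_eq_self_iff.mpr h)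
  have hL : ∀ s, LO s ∈ H := by
    intro s
    have hdB := det_ne B
    -- B' = UU (-a/c) * B
    have hB' : UU (-(B 0 0 / B 1 0)) * B ∈ H := H.mul_mem (hU _) hB
    set B' := UU (-(B 0 0 / B 1 0)) * B with hB'd
    have b00 : B' 0 0 = 0 := by rw [hB'd, mul00]; simp [UU]; field_simp; ring
    have b10 : B' 1 0 = B 1 0 := by rw [hB'd, mul10]; simp [UU]
    have b10' : B' 1 0 ≠ 0 := by rw [b10]; exact hBc
    have hdB' := det_ne B'
    have b01 : B' 0 1 ≠ 0 := by intro h; simp [b00, h] at hdB'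
    have e : LO s = B' * UU (s * B' 0 1 / B' 1 0) * B'⁻¹ := by
      rw [eq_mul_inv_iff_mul_eq]
      apply gl_ext <;> simp only [mul00, mul01, mul10, mul11] <;> simp [UU, LO, b00]
      field_simp
      
    rw [e]
    exact H.mul_mem (H.mul_mem hB' (hU _)) (H.inv_mem hB')
  have hSL1 : ∀ g : GL (Fin 2) K, g 0 0 * g 1 1 - g 0 1 * g 1 0 = 1 → g 1 0 ≠ 0 → g ∈ H := by
    intro g h1 hg
    have e : g = UU ((g 0 0 - 1) / g 1 0) * LO (g 1 0) * UU ((g 1 1 - 1) / g 1 0) := by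
      apply gl_ext <;> simp only [mul00, mul01, mul10, mul11] <;> simp [UU, LO]
      · field_simp; ring
      · field_simp; linear_combination -h1
      · field_simp; ring
    rw [e]
    exact H.mul_mem (H.mul_mem (hU _) (hL _)) (hU _)
  have hSL : ∀ g : GL (Fin 2) K, g 0 0 * g 1 1 - g 0 1 * g 1 0 = 1 → g ∈ H := by
    intro g h1
    by_cases hg : g 1 0 = 0
    · have h2 : LO 1 * g ∈ H := by
        apply hSL1
        · simp only [mul00, mul01, mul10, mul11]; simp [LO]; linear_combination h1
        · simp only [mul10]; simp [LO, hg]; intro h; simp [h, hg] at h1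
      have := H.mul_mem (H.inv_mem (hL 1)) h2
      simpa using this
    · exact hSL1 g h1 hg
  have hsq : ∀ g : GL (Fin 2) K, χ g.val.det = 1 → g ∈ H := by
    intro g hg
    have hg0 := g.det_ne_zero
    rw [show χ g.val.det = quadraticChar (ZMod 29) g.val.det from rfl,
      quadraticChar_one_iff_isSquare hg0] at hg
    obtain ⟨e, he⟩ := hg
    have he0 : e ≠ 0 := by rintro rfl; exact hg0 (by simpa using he)
    rw [det_fin_two] at he
    have h2 : SC e⁻¹ (inv_ne_zero he0) * g ∈ H := by
      apply hSL
      simp only [mul00, mul01, mul10, mul11]; simp [SC]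
      field_simp; linear_combination he
    have h3 := H.mul_mem (H.inv_mem (hs e⁻¹ (inv_ne_zero he0))) h2
    simpa using h3
  rw [eq_top_iff]
  intro g _
  rcases χ_or g.det_ne_zero with h | h
  · exact hsq g h
  · have : g * C ∈ H := by
      apply hsq
      rw [Units.val_mul, det_mul, χ_mul]
      rw [hC1]
      have h' : χ g.val.det = -1 := h
      rw [h']; norm_num
    have := H.mul_mem this (H.inv_mem hC)
    simpa using this

lemma gen' (H : Subgroup (GL (Fin 2) K)) (hs : Subgroup.center _ ≤ H)
    (A : GL (Fin 2) K) (hA : A ∈ H) (i : P) (hA1 : A • i = i)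
    (hA2 : ∀ k : P, A • k = k → k = i)
    (B : GL (Fin 2) K) (hB : B ∈ H) (hB1 : B • i ≠ i)
    (C : GL (Fin 2) K) (hC : C ∈ H) (hC1 : χ C.val.det = -1) : H = ⊤ := by
  obtain ⟨N, hN⟩ : ∃ N : GL (Fin 2) K, N • (OnePoint.infty : P) = i := by
    induction i using OnePoint.rec with
    | infty => exact ⟨1, by simp⟩
    | coe k => exact ⟨mkGL k (-1) 1 0 (by simp), smul_eq_of _ _ _ 1 (by simp) (by simp)⟩
  let H' := H.comap (MulAut.conj N).toMonoidHom
  have hmem : ∀ g, g ∈ H → N⁻¹ * g * N ∈ H' := by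
    intro g hg
    simp only [H', Subgroup.mem_comap, MulEquiv.coe_toMonoidHom, MulAut.conj_apply]
    simpa [mul_assoc] using hg
  have htop : H' = ⊤ := by
    refine gen H' ?_ (N⁻¹ * A * N) (hmem _ hA) ?_ ?_ (N⁻¹ * B * N) (hmem _ hB) ?_ (N⁻¹ * C * N) (hmem _ hC) ?_
    · intro t h
      have hc : SC t h ∈ Subgroup.center (GL (Fin 2) K) := by
        rw [GeneralLinearGroup.mem_center_iff_val_mem_range_scalar]
        refine ⟨t, ?_⟩
        ext i j
        fin_cases i <;> fin_cases j <;> simp [scalar_apply, SC]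
      simp only [H', Subgroup.mem_comap, MulEquiv.coe_toMonoidHom, MulAut.conj_apply]
      rw [Subgroup.mem_center_iff.mp hc N]
      simpa using hs hc
    · rw [mul_smul, mul_smul, hN, hA1, inv_smul_eq_iff, hN]
    · intro k hk
      rw [mul_smul, mul_smul, inv_smul_eq_iff] at hk
      have := hA2 _ hk
      rw [← hN] at this
      have := MulAction.injective N this
      simp at this
    · intro h
      rw [mul_smul, mul_smul, inv_smul_eq_iff, hN] at h
      exact hB1 h
    · have : (N⁻¹ * C * N).val.det = C.val.det := by
        simp only [Units.val_mul, det_mul]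
        rw [mul_right_comm, ← det_mul, ← Units.val_mul]; simp
      rw [this, hC1]
  rw [eq_top_iff]
  intro g _
  have : N⁻¹ * g * N ∈ H' := by rw [htop]; trivial
  simp only [H', Subgroup.mem_comap, MulEquiv.coe_toMonoidHom, MulAut.conj_apply] at this
  simpa [mul_assoc] using this

theorem main {G : Type*} [Group G] (φ : G →* Equiv.Perm P) (hφ : Function.Injective φ)
    (h1 : ∀ g, ∃ δ, Good (φ g) δ) (h2 : ∃ g, Good (φ g) (-1))
    (h3 : ∃ g i, ∀ k, φ g k = k ↔ k = i) (h4 : ∀ i, ∃ g, φ g i ≠ i) :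
    Nonempty (G ≃* GL (Fin 2) (ZMod 29) ⧸ Subgroup.center (GL (Fin 2) (ZMod 29))) := by
  have hr : φ.range = pp.range := by
    apply le_antisymm
    · rintro _ ⟨g, rfl⟩
      obtain ⟨δ, h⟩ := h1 g
      exact mem_range _ δ h
    · have : φ.range.comap pp = ⊤ := by
        obtain ⟨gC, hC⟩ := h2
        obtain ⟨gA, i, hA⟩ := h3
        obtain ⟨gB, hB⟩ := h4 i
        obtain ⟨δA, h⟩ := h1 gA
        obtain ⟨A, hA'⟩ := mem_range _ _ h
        obtain ⟨δB, h⟩ := h1 gB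
        obtain ⟨B, hB'⟩ := mem_range _ _ h
        obtain ⟨C, hC'⟩ := mem_range _ _ hC
        have sA : ∀ k, A • k = φ gA k := fun k => by rw [← hA']; rfl
        have sB : ∀ k, B • k = φ gB k := fun k => by rw [← hB']; rfl
        have sC : ∀ k, C • k = φ gC k := fun k => by rw [← hC']; rfl
        refine gen' _ ?_ A ⟨gA, hA'.symm⟩ i ?_ ?_ B ⟨gB, hB'.symm⟩ ?_ C ⟨gC, hC'.symm⟩ ?_
        · rw [← ker_pp]
          intro g hg
          rw [Subgroup.mem_comap, MonoidHom.mem_ker.mp hg]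
          exact Subgroup.one_mem _
        · rw [sA, hA]
        · intro k; rw [sA, hA]; exact id
        · rw [sB]; exact hB
        · have a := hC OnePoint.infty ((0 : K) : P) ((1 : K) : P) (by simp) (by simp) (by simp)
          rw [← sC, ← sC, ← sC, ee_smul] at a
          have e : ee OnePoint.infty ((0 : K) : P) ((1 : K) : P) ≠ 0 := by
            have : ∀ i j : P, i ≠ j → cc i j ≠ 0 := by
              intro i j hij
              rcases χ_or (dd_ne hij) with h | h <;> simp [cc, h]
            unfold ee
            exact mul_ne_zero (mul_ne_zero (this _ _ (by simp)) (this _ _ (by simp))) (this _ _ (by simp))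
          exact mul_right_cancel₀ e a
      rintro _ ⟨g, rfl⟩
      have hg : g ∈ φ.range.comap pp := by rw [this]; trivial
      exact hg
  refine ⟨(MonoidHom.ofInjective hφ).trans ((MulEquiv.subgroupCongr hr).trans
    ((QuotientGroup.quotientKerEquivRange pp).symm.trans (QuotientGroup.quotientMulEquivOfEq ker_pp)))⟩

end PGLcore
namespace PGLsp
open PGLid PGLcore
def aL : List ℕ := [19772, 32340, 371834, 782625, 166400, 835882, 660649, 647232, 318668, 296282, 103163, 193177, 342477, 230636, 137065, 639539, 271099, 343572, 190321, 402818, 917245, 130143, 159166, 200266, 436899, 856526, 887093, 533643, 862910, 5612]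
def uL : List ℕ := [377284, 151903, 48118, 364681, 706091, 153663, 118625, 343597, 824032, 585803, 214603, 712039, 897624, 803346, 772626, 60118, 8775, 297954, 311914, 806488, 804273, 578532, 75608, 179971, 712488, 662064, 141203, 490396, 38382, 1]
def evN (l : List ℕ) (x : ℕ) : ℕ := l.foldr (fun c acc => Nat.mod (Nat.add c (Nat.mul x acc)) 921157) 0
def rdN (l : List ℤ) : List ℕ := l.map (fun c => (c % 921157).toNat)
def sqN (n : ℕ) : Bool := [1, 4, 5, 6, 7, 9, 13, 16, 20, 22, 23, 24, 25, 28].any (fun m => Nat.beq m n)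
def cN (i j : ℕ) : ℕ := if (Nat.beq i 29 || Nat.beq j 29 || sqN ((i + 29 - j) % 29)) = true then 1 else 921156
def rowsN (j : ℕ) : List ℕ := rc.map (fun row => evN (rdN row) (aL.getD j 0))
set_option maxRecDepth 100000
theorem chkR : (List.range 30).all (fun j => (List.range 30).all fun i => Nat.beq i j ||
    Nat.beq (evN (rowsN j) (aL.getD i 0)) ((cN i j * 153900 * uL.getD i 0 * uL.getD j 0) % 921157)) = true := by
  decide +kernel
theorem chkL : (List.range 30).all (fun j =>
    Nat.beq (evN (rdN lc) (aL.getD j 0)) ((834574 * (uL.getD j 0 * uL.getD j 0)) % 921157)) = true := by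
  decide +kernel
theorem chkQ : (List.range 30).all (fun j => Nat.beq (evN (rdN qs) (aL.getD j 0)) 0) = true := by
  decide +kernel
theorem chkU : (List.range 30).all (fun j => Nat.blt 0 (uL.getD j 0) && Nat.blt (uL.getD j 0) 921157) = true := by
  decide +kernel
theorem chkA : (List.range 30).all (fun j => Nat.blt (aL.getD j 0) 921157 && (List.range 30).all fun i => Nat.beq i j ||
   !(Nat.beq (aL.getD i 0) (aL.getD j 0))) = true := by
  decide +kernel

def idx (i : P) : ℕ := Option.elim i 29 (fun k => k.val)
lemma idx_lt (i : P) : idx i < 30 := by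
  induction i using OnePoint.rec with
  | infty => exact Nat.lt_succ_self 29
  | coe k => exact (ZMod.val_lt k).trans (by norm_num)
lemma idx_inj {i j : P} (h : i ≠ j) : idx i ≠ idx j := by
  induction i using OnePoint.rec <;> induction j using OnePoint.rec
  · exact absurd rfl h
  · rename_i k; exact (ZMod.val_lt k).ne'
  · rename_i k; exact (ZMod.val_lt k).ne
  · rename_i k k'
    intro e
    exact h (congrArg _ (ZMod.val_injective 29 e))

lemma cN_coe : ∀ a b : ZMod 29, a ≠ b → cN a.val b.val = if a - b ∈ sqs then 1 else 921156 := by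
  decide +kernel

lemma cc_eq {i j : P} (h : i ≠ j) : cc i j = if dd i j ∈ sqs then 1 else -1 := by
  split_ifs with h1
  · exact (χ_sqs _).mpr h1
  · rcases χ_or (dd_ne h) with h2 | h2
    · exact absurd ((χ_sqs _).mp h2) h1
    · exact h2

variable {k : Type*} [CommRing k] [CharP k 921157]

lemma pk : (921157 : k) = 0 := by
  have := CharP.cast_eq_zero k 921157
  exact_mod_cast this

lemma cN_cast {i j : P} (h : i ≠ j) : (cN (idx i) (idx j) : k) = (cc i j : k) := by
  have hm : ((921156 : ℕ) : k) = -1 := by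
    have : ((921156 : ℕ) : k) = 921157 - 1 := by norm_num
    rw [this, pk]; ring
  rw [cc_eq h]
  have : cN (idx i) (idx j) = if dd i j ∈ sqs then 1 else 921156 := by
    induction i using OnePoint.rec <;> induction j using OnePoint.rec
    · exact absurd rfl h
    · rename_i b
      have h1 : dd OnePoint.infty (b : P) = 1 := by simp [dd]
      rw [h1, if_pos (by decide)]
      simp [cN, idx, OnePoint.infty]
    · rename_i b
      have h1 : dd (b : P) OnePoint.infty = -1 := by simp [dd]
      rw [h1, if_pos (by decide)]
      have : idx OnePoint.infty = 29 := rfl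
      simp [cN, this]
    · rename_i a b
      have h1 : dd (a : P) b = a - b := by simp [dd]
      rw [h1]
      exact cN_coe a b (fun e => h (by rw [e]))
  rw [this]
  split_ifs
  · simp
  · rw [hm]; simp

lemma evN_cast (l : List ℕ) (x : ℕ) : (evN l x : k) = ev (l.map (Nat.cast : ℕ → k)) (x : k) := by
  induction l with
  | nil => simp [evN]
  | cons c l ih =>
    have : evN (c :: l) x = (c + x * evN l x) % 921157 := rfl
    rw [this, List.map_cons, ev_cons, ← ih]
    have h2 := CharP.cast_eq_mod k 921157 (c + x * evN l x)
    rw [← h2]; push_cast; rfl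

lemma rdN_cast (l : List ℤ) : (rdN l).map (Nat.cast : ℕ → k) = cz k l := by
  rw [rdN, List.map_map, cz]
  refine List.map_congr_left fun c _ => ?_
  simp only [Function.comp_apply]
  have h1 : (((c % 921157).toNat : ℕ) : ℤ) = c % 921157 := Int.toNat_of_nonneg (Int.emod_nonneg _ (by norm_num))
  have h2 : (((c % 921157).toNat : ℕ) : k) = ((c % 921157 : ℤ) : k) := by
    conv_rhs => rw [← h1]
    rw [Int.cast_natCast]
  rw [h2]
  have h3 := Int.emod_add_mul_ediv c 921157
  have h4 : (c : k) = ((c % 921157 : ℤ) : k) + ((921157 : ℤ) : k) * ((c / 921157 : ℤ) : k) := by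
    rw [← Int.cast_mul, ← Int.cast_add, h3]
  have h5 : ((921157 : ℤ) : k) = 0 := by rw [Int.cast_ofNat]; exact pk
  rw [h5, zero_mul, add_zero] at h4
  simpa using h4.symm

def av (i : P) : ℕ := aL.getD (idx i) 0
def uv (i : P) : ℕ := uL.getD (idx i) 0

lemma mod_cast_eq {a b : ℕ} (h : a = b % 921157) : (a : k) = b := by
  rw [h]; exact (CharP.cast_eq_mod k 921157 b).symm

lemma r_eq {i j : P} (h : i ≠ j) :
    ev (rc.map (fun row => ev (cz k row) (av j : k))) (av i : k) = cc i j * 153900 * uv i * uv j := by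
  have h1 := List.all_eq_true.mp (List.all_eq_true.mp chkR (idx j) (List.mem_range.mpr (idx_lt j)))
    (idx i) (List.mem_range.mpr (idx_lt i))
  rw [Bool.or_eq_true] at h1
  have h1 := h1.resolve_left (fun e => idx_inj h (Nat.eq_of_beq_eq_true e))
  have h2 := mod_cast_eq (k := k) (Nat.eq_of_beq_eq_true h1)
  rw [evN_cast] at h2
  have h3 : (rowsN (idx j)).map (Nat.cast : ℕ → k) = rc.map (fun row => ev (cz k row) (av j : k)) := by
    rw [rowsN, List.map_map]
    refine List.map_congr_left fun row _ => ?_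
    simp only [Function.comp_apply]
    rw [evN_cast, rdN_cast]; rfl
  rw [h3] at h2
  push_cast at h2
  rw [cN_cast h] at h2
  exact h2

lemma l_eq (i : P) : ev (cz k lc) (av i : k) = 834574 * (uv i * uv i) := by
  have h1 := List.all_eq_true.mp chkL (idx i) (List.mem_range.mpr (idx_lt i))
  have h2 := mod_cast_eq (k := k) (Nat.eq_of_beq_eq_true h1)
  rw [evN_cast, rdN_cast] at h2
  push_cast at h2
  exact h2

lemma q_eq (i : P) : ev (cz k qs) (av i : k) = 0 := by
  have h1 := List.all_eq_true.mp chkQ (idx i) (List.mem_range.mpr (idx_lt i))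
  have h2 := congrArg (Nat.cast : ℕ → k) (Nat.eq_of_beq_eq_true h1)
  rw [evN_cast, rdN_cast, Nat.cast_zero] at h2
  exact h2

lemma cast_ne {a : ℕ} (h0 : 0 < a) (h1 : a < 921157) : (a : k) ≠ 0 := by
  intro h
  have := (CharP.cast_eq_zero_iff k 921157 a).mp h
  exact absurd (Nat.le_of_dvd h0 this) (by omega)

lemma u_ne (i : P) : (uv i : k) ≠ 0 := by
  have h1 := List.all_eq_true.mp chkU (idx i) (List.mem_range.mpr (idx_lt i))
  rw [Bool.and_eq_true] at h1
  exact cast_ne (Nat.le_of_ble_eq_true h1.1) (Nat.le_of_ble_eq_true h1.2)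

lemma a_ne {i j : P} (h : i ≠ j) : (av i : k) ≠ av j := by
  have h1 := List.all_eq_true.mp chkA (idx j) (List.mem_range.mpr (idx_lt j))
  have h1' := List.all_eq_true.mp chkA (idx i) (List.mem_range.mpr (idx_lt i))
  rw [Bool.and_eq_true] at h1 h1'
  have h2 := List.all_eq_true.mp h1.2 (idx i) (List.mem_range.mpr (idx_lt i))
  rw [Bool.or_eq_true] at h2
  have h2 := h2.resolve_left (fun e => idx_inj h (Nat.eq_of_beq_eq_true e))
  have h3 : av i < 921157 := Nat.le_of_ble_eq_true h1'.1
  have h4 : av j < 921157 := Nat.le_of_ble_eq_true h1.1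
  have h5 : av i ≠ av j := by
    intro e
    have : Nat.beq (aL.getD (idx i) 0) (aL.getD (idx j) 0) = true := by
      rw [Nat.beq_eq]; exact e
    rw [this] at h2
    simp at h2
  intro h6
  have h7 := (CharP.cast_eq_iff_mod_eq k 921157).mp h6
  rw [Nat.mod_eq_of_lt h3, Nat.mod_eq_of_lt h4] at h7
  exact h5 h7

end PGLsp
namespace PGLnt
open Polynomial PGLid PGLcore PGLsp NumberField

lemma Q_eq : Q = qR.map (Int.castRingHom ℚ) := by
  have h := map_ev (mapRingHom (Int.castRingHom ℚ)) (cz ℤ[X] qs) X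
  rw [map_cz] at h
  have h2 : qR.map (Int.castRingHom ℚ) = ev (cz ℚ[X] qs) X := by
    rw [qR]; simpa using h
  rw [h2]
  simp only [qs, qc, cz, List.cons_append, List.nil_append, List.map_cons, List.map_nil, ev_cons, ev_nil, Q]
  simp only [eq_intCast, Int.cast_neg, Int.cast_ofNat, Int.cast_one]
  ring

lemma eval_map_qR {k : Type*} [CommRing k] (a : k) : (qR.map (Int.castRingHom k)).eval a = ev (cz k qs) a := by
  rw [eval_map]
  have h := map_ev (eval₂RingHom (Int.castRingHom k) a) (cz ℤ[X] qs) X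
  rw [map_cz] at h
  simpa [qR] using h

lemma qR_monic : qR.Monic := by
  have h : qR.natDegree ≤ 30 := natDegree_le_iff_coeff_eq_zero.mpr fun i hi => qRhi i hi
  exact monic_of_natDegree_le_of_coeff_eq_one 30 h qR30

lemma qR_deg : qR.natDegree = 30 := by
  have h : qR.natDegree ≤ 30 := natDegree_le_iff_coeff_eq_zero.mpr fun i hi => qRhi i hi
  exact le_antisymm h (le_natDegree_of_ne_zero (by rw [qR30]; norm_num))

def dev (l : List ℤ) (x : ℤ) : ℤ × ℤ :=
  l.foldr (fun c r => (c + x * r.1, r.1 + x * r.2)) (0, 0)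

lemma dev_eq (l : List ℤ) (x : ℤ) : (dev l x).1 = ev l x ∧
    (dev l x).2 = (derivative (ev (cz ℤ[X] l) X)).eval x := by
  induction l with
  | nil => simp [dev, cz]
  | cons c l ih =>
    obtain ⟨h1, h2⟩ := ih
    have e1 : (dev (c :: l) x).1 = c + x * (dev l x).1 := rfl
    have e2 : (dev (c :: l) x).2 = (dev l x).1 + x * (dev l x).2 := rfl
    have e3 : ev (cz ℤ[X] (c :: l)) X = C c + X * ev (cz ℤ[X] l) X := by simp [cz]
    refine ⟨by rw [e1, h1, ev_cons], ?_⟩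
    rw [e2, e3, h1, h2, derivative_add, derivative_C, derivative_mul, derivative_X, ← eval_ev]
    simp

theorem chk197a : (dev qs 59).2 % 197 ≠ 0 := by decide +kernel
theorem chk197b : ev qs 59 % 197 = 0 := by decide +kernel
theorem chk197c : (List.range 197).all (fun n => Nat.beq n 59 || !(ev qs (Int.ofNat n) % 197 == 0)) = true := by
  decide +kernel
theorem chk2a : ∀ a : ZMod 2, ev (cz (ZMod 2) qs) a ≠ 0 := by decide +kernel

lemma no_int_root (n : ℤ) : ev qs n ≠ 0 := by
  intro h
  have := map_ev (Int.castRingHom (ZMod 2)) qs n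
  rw [h, map_zero] at this
  exact chk2a _ this.symm

lemma pow_char_nat {k : Type*} [Field k] (p : ℕ) [hp : Fact p.Prime] [CharP k p] (y : k) (h : y ^ p = y) :
    ∃ n < p, y = (n : k) := by
  classical
  by_contra! hc
  let S : Finset k := (Finset.range p).image (Nat.cast : ℕ → k)
  have hS : S.card = p := by
    rw [Finset.card_image_of_injOn, Finset.card_range]
    intro a ha b hb hab
    have ha : a < p := by simpa using ha
    have hb : b < p := by simpa using hb
    have := (CharP.cast_eq_iff_mod_eq k p).mp hab
    rwa [Nat.mod_eq_of_lt ha, Nat.mod_eq_of_lt hb] at this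
  have hy : y ∉ S := by
    intro hy
    obtain ⟨n, hn, e⟩ := Finset.mem_image.mp hy
    exact hc n (by simpa using hn) e.symm
  have hne : (X ^ p - X : k[X]) ≠ 0 := FiniteField.X_pow_card_sub_X_ne_zero k hp.out.one_lt
  have hsub : insert y S ⊆ (X ^ p - X : k[X]).roots.toFinset := by
    intro z hz
    rw [Multiset.mem_toFinset, mem_roots hne, IsRoot.def]
    simp only [eval_sub, eval_pow, eval_X]
    rw [sub_eq_zero]
    rcases Finset.mem_insert.mp hz with rfl | hz
    · exact h
    · obtain ⟨n, hn, rfl⟩ := Finset.mem_image.mp hz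
      exact map_natCast (frobenius k p) n
  have h1 := Finset.card_le_card hsub
  rw [Finset.card_insert_of_notMem hy, hS] at h1
  have h2 := (Multiset.toFinset_card_le (X ^ p - X : k[X]).roots).trans (card_roots' _)
  rw [FiniteField.X_pow_card_sub_X_natDegree_eq k hp.out.one_lt] at h2
  omega

variable {L : Type*} [Field L] [NumberField L]

lemma exists_roots (hs : (Q.map (algebraMap ℚ L)).Splits) :
    ∃ s : Multiset (𝓞 L), qR.map (Int.castRingHom (𝓞 L)) = (s.map fun r => X - C r).prod := by
  have hmap : Q.map (algebraMap ℚ L) = qR.map (Int.castRingHom L) := by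
    rw [Q_eq, Polynomial.map_map]; congr 1; ext; simp
  rw [hmap] at hs
  have h1 := hs.eq_prod_roots
  rw [(qR_monic.map _).leadingCoeff, C_1, one_mul] at h1
  have h2 : ∀ x ∈ (qR.map (Int.castRingHom L)).roots, IsIntegral ℤ x := by
    intro x hx
    refine ⟨qR, qR_monic, ?_⟩
    have := (mem_roots'.mp hx).2
    rw [IsRoot.def, eval_map] at this
    exact this
  have h3 : ∀ t : Multiset L, (∀ x ∈ t, IsIntegral ℤ x) → ∃ s : Multiset (𝓞 L), s.map (algebraMap (𝓞 L) L) = t := by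
    intro t
    induction t using Multiset.induction_on with
    | empty => intro _; exact ⟨0, rfl⟩
    | cons a t ih =>
      intro h
      obtain ⟨s, hs⟩ := ih fun x hx => h x (Multiset.mem_cons_of_mem hx)
      obtain ⟨b, hb⟩ : ∃ b : 𝓞 L, algebraMap (𝓞 L) L b = a :=
        ⟨⟨a, h a (Multiset.mem_cons_self _ _)⟩, rfl⟩
      exact ⟨b ::ₘ s, by rw [Multiset.map_cons, hs, hb]⟩
  obtain ⟨s, hs'⟩ := h3 _ h2
  refine ⟨s, ?_⟩
  apply Polynomial.map_injective (algebraMap (𝓞 L) L) RingOfIntegers.coe_injective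
  rw [Polynomial.map_map, Polynomial.map_multiset_prod, Multiset.map_map]
  have : (algebraMap (𝓞 L) L).comp (Int.castRingHom (𝓞 L)) = Int.castRingHom L := by ext; simp
  rw [this, h1, ← hs', Multiset.map_map]
  simp

lemma ev_prod {k : Type*} [CommRing k] {s : Multiset (𝓞 L)}
    (hs : qR.map (Int.castRingHom (𝓞 L)) = (s.map fun r => X - C r).prod) (f : 𝓞 L →+* k) (a : k) :
    ev (cz k qs) a = (s.map fun r => a - f r).prod := by
  have h := congrArg (Polynomial.map f) hs
  rw [Polynomial.map_map] at h
  have e : f.comp (Int.castRingHom (𝓞 L)) = Int.castRingHom k := by ext; simp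
  rw [e] at h
  rw [← eval_map_qR, h, Polynomial.map_multiset_prod, eval_multiset_prod, Multiset.map_map, Multiset.map_map]
  simp

lemma exists_prime (p : ℕ) (hp : p.Prime) : ∃ I : Ideal (𝓞 L), I.IsMaximal ∧ I.under ℤ = Ideal.span {(p : ℤ)} := by
  have := Fact.mk hp
  have := Int.ideal_span_isMaximal_of_prime p
  obtain ⟨I, h1, h2⟩ := Ideal.exists_maximal_ideal_liesOver_of_isIntegral (S := 𝓞 L) (Ideal.span {(p : ℤ)})
  exact ⟨I, h1, h2.over.symm⟩

lemma charP_quot {p : ℕ} (hp : p.Prime) {I : Ideal (𝓞 L)} [I.IsMaximal] (h : I.under ℤ = Ideal.span {(p : ℤ)}) :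
    CharP (𝓞 L ⧸ I) p := by
  rw [CharP.charP_iff_prime_eq_zero hp]
  have : (p : ℤ) ∈ I.under ℤ := by rw [h]; exact Ideal.mem_span_singleton_self _
  rw [Ideal.under_def, Ideal.mem_comap] at this
  have := Ideal.Quotient.eq_zero_iff_mem.mpr this
  simpa using this

attribute [local instance] Ideal.Quotient.field

/-- labelled roots -/
structure Lab (L : Type*) [Field L] [NumberField L] where
  s : Multiset (𝓞 L)
  hs : qR.map (Int.castRingHom (𝓞 L)) = (s.map fun r => X - C r).prod
  I : Ideal (𝓞 L)
  hI : I.IsMaximal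
  hI2 : CharP (𝓞 L ⧸ I) 921157
  ι : P → 𝓞 L
  inj : Function.Injective ι
  hι : ∀ i, ev (cz (𝓞 L) qs) (ι i) = 0
  surj : ∀ x, ev (cz (𝓞 L) qs) x = 0 → ∃ i, ι i = x
  mem : ∀ i, ι i ∈ s
  red : ∀ i, Ideal.Quotient.mk I (ι i) = (av i : 𝓞 L ⧸ I)

lemma exists_lab (hs : (Q.map (algebraMap ℚ L)).Splits) : Nonempty (Lab L) := by
  classical
  obtain ⟨s, hs⟩ := exists_roots hs
  have hp : Nat.Prime 921157 := by norm_num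
  obtain ⟨I, hI, hI2⟩ := exists_prime (L := L) 921157 hp
  have hch := charP_quot hp hI2
  have hroot : ∀ x, x ∈ s ↔ ev (cz (𝓞 L) qs) x = 0 := by
    intro x
    rw [ev_prod hs (RingHom.id _) x, Multiset.prod_eq_zero_iff, Multiset.mem_map]
    constructor
    · intro h; exact ⟨x, h, by simp⟩
    · rintro ⟨r, hr, e⟩
      rw [sub_eq_zero] at e
      rw [e]; exact hr
  have h1 : ∀ i : P, ∃ x ∈ s, Ideal.Quotient.mk I x = (av i : 𝓞 L ⧸ I) := by
    intro i
    have h := q_eq (k := 𝓞 L ⧸ I) i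
    rw [ev_prod hs (Ideal.Quotient.mk I), Multiset.prod_eq_zero_iff, Multiset.mem_map] at h
    obtain ⟨r, hr, e⟩ := h
    exact ⟨r, hr, (sub_eq_zero.mp e).symm⟩
  choose ι h2 h3 using h1
  have inj : Function.Injective ι := by
    intro i j h
    by_contra hij
    exact a_ne (k := 𝓞 L ⧸ I) hij (by rw [← h3, ← h3, h])
  have hcard : Multiset.card s = 30 := by
    have h := congrArg natDegree hs
    rw [natDegree_multiset_prod_X_sub_C_eq_card, qR_monic.natDegree_map, qR_deg] at h
    exact h.symm
  have hP : Fintype.card P = 30 := by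
    have : Fintype.card (Option (ZMod 29)) = 30 := by simp [ZMod.card]
    exact (Fintype.card_congr (Equiv.refl _)).trans this
  have himg : Finset.univ.image ι = s.toFinset := by
    apply Finset.eq_of_subset_of_card_le
    · intro x hx
      obtain ⟨i, -, rfl⟩ := Finset.mem_image.mp hx
      exact Multiset.mem_toFinset.mpr (h2 i)
    · rw [Finset.card_image_of_injective _ inj, Finset.card_univ, hP, ← hcard]
      exact Multiset.toFinset_card_le s
  refine ⟨⟨s, hs, I, hI, hch, ι, inj, fun i => (hroot _).mp (h2 i), ?_, h2, h3⟩⟩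
  intro x hx
  have : x ∈ Finset.univ.image ι := by rw [himg]; exact Multiset.mem_toFinset.mpr ((hroot x).mpr hx)
  obtain ⟨i, -, h⟩ := Finset.mem_image.mp this
  exact ⟨i, h⟩

end PGLnt
namespace PGLnt
open Polynomial PGLid PGLcore PGLsp NumberField

attribute [local instance] Ideal.Quotient.field

section mor
variable {L : Type*} [Field L] [NumberField L]

def rZ (D : Lab L) (i j : P) : 𝓞 L :=
  ev (rc.map (fun row => ev (cz (𝓞 L) row) (D.ι j))) (D.ι i)

def lZ (D : Lab L) (i : P) : 𝓞 L := ev (cz (𝓞 L) lc) (D.ι i)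

lemma map_r {A B : Type*} [CommRing A] [CommRing B] (f : A →+* B) (x y : A) :
    f (ev (rc.map (fun row => ev (cz A row) y)) x) = ev (rc.map (fun row => ev (cz B row) (f y))) (f x) := by
  rw [map_ev, List.map_map]
  congr 2
  funext row
  simp only [Function.comp]
  rw [map_ev, map_cz]

lemma map_l {A B : Type*} [CommRing A] [CommRing B] (f : A →+* B) (l : List ℤ) (x : A) :
    f (ev (cz A l) x) = ev (cz B l) (f x) := by
  rw [map_ev, map_cz]

lemma rl (D : Lab L) {i j : P} (h : i ≠ j) : 29 * (rZ D i j) ^ 2 = lZ D j * lZ D i := by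
  have h1 := main_id (D.ι i) (D.ι j) (D.hι i) (D.hι j)
  rcases mul_eq_zero.mp h1 with h2 | h2
  · exact absurd (D.inj (sub_eq_zero.mp h2)) h
  · exact sub_eq_zero.mp h2

lemma red_r (D : Lab L) {i j : P} (h : i ≠ j) :
    Ideal.Quotient.mk D.I (rZ D i j) = cc i j * 153900 * uv i * uv j := by
  have := D.hI2
  rw [rZ, map_r, D.red, D.red, r_eq h]

lemma red_l (D : Lab L) (i : P) :
    Ideal.Quotient.mk D.I (lZ D i) = 834574 * (uv i * uv i) := by
  have := D.hI2
  rw [lZ, map_l, D.red, l_eq]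

def TT (D : Lab L) (i j k : P) : 𝓞 L := rZ D i j * rZ D j k * rZ D k i
def LL (D : Lab L) (i j k : P) : 𝓞 L := lZ D i * lZ D j * lZ D k

lemma TL (D : Lab L) {i j k : P} (h1 : i ≠ j) (h2 : j ≠ k) (h3 : k ≠ i) :
    29 ^ 3 * TT D i j k ^ 2 = LL D i j k ^ 2 := by
  have e1 := rl D h1
  have e2 := rl D h2
  have e3 := rl D h3
  calc 29 ^ 3 * TT D i j k ^ 2 = (29 * rZ D i j ^ 2) * (29 * rZ D j k ^ 2) * (29 * rZ D k i ^ 2) := by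
        unfold TT; ring
    _ = _ := by rw [e1, e2, e3]; unfold LL; ring

lemma l_ne (D : Lab L) (i : P) : lZ D i ≠ 0 := by
  intro h
  have := D.hI2
  have := D.hI
  have h1 := red_l D i
  rw [h, map_zero] at h1
  have hu := u_ne (k := 𝓞 L ⧸ D.I) i
  have hc : ((834574 : ℕ) : 𝓞 L ⧸ D.I) ≠ 0 := cast_ne (by norm_num) (by norm_num)
  push_cast at hc
  exact mul_ne_zero hc (mul_ne_zero hu hu) h1.symm

lemma LL_ne (D : Lab L) (i j k : P) : LL D i j k ≠ 0 :=
  mul_ne_zero (mul_ne_zero (l_ne D i) (l_ne D j)) (l_ne D k)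

lemma ee_or {i j k : P} (h1 : i ≠ j) (h2 : j ≠ k) (h3 : k ≠ i) : ee i j k = 1 ∨ ee i j k = -1 := by
  unfold ee cc
  rcases χ_or (dd_ne h1) with a | a <;> rcases χ_or (dd_ne h2) with b | b <;>
    rcases χ_or (dd_ne h3) with c | c <;> rw [a, b, c] <;> norm_num

lemma cross (D : Lab L) {i j k i' j' k' : P} (h1 : i ≠ j) (h2 : j ≠ k) (h3 : k ≠ i)
    (h1' : i' ≠ j') (h2' : j' ≠ k') (h3' : k' ≠ i') :
    (ee i' j' k' : 𝓞 L) * (TT D i j k * LL D i' j' k') = ee i j k * (TT D i' j' k' * LL D i j k) := by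
  have := D.hI2
  have := D.hI
  have e1 := TL D h1 h2 h3
  have e2 := TL D h1' h2' h3'
  have hsq : (TT D i j k * LL D i' j' k') ^ 2 = (TT D i' j' k' * LL D i j k) ^ 2 := by
    rw [mul_pow, mul_pow, ← e1, ← e2]; ring
  have ne2 : ((2 : ℕ) : 𝓞 L ⧸ D.I) ≠ 0 := cast_ne (by norm_num) (by norm_num)
  have nec : ((834574 : ℕ) : 𝓞 L ⧸ D.I) ≠ 0 := cast_ne (by norm_num) (by norm_num)
  have nee : ((153900 : ℕ) : 𝓞 L ⧸ D.I) ≠ 0 := cast_ne (by norm_num) (by norm_num)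
  have u1 := u_ne (k := 𝓞 L ⧸ D.I) i
  have u2 := u_ne (k := 𝓞 L ⧸ D.I) j
  have u3 := u_ne (k := 𝓞 L ⧸ D.I) k
  have u4 := u_ne (k := 𝓞 L ⧸ D.I) i'
  have u5 := u_ne (k := 𝓞 L ⧸ D.I) j'
  have u6 := u_ne (k := 𝓞 L ⧸ D.I) k'
  push_cast at ne2 nec nee
  set W : 𝓞 L ⧸ D.I := 153900 ^ 3 * 834574 ^ 3 * (uv i * uv j * uv k) ^ 2 * (uv i' * uv j' * uv k') ^ 2 with hW
  have W0 : W ≠ 0 := by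
    rw [hW]
    exact mul_ne_zero (mul_ne_zero (mul_ne_zero (pow_ne_zero _ nee) (pow_ne_zero _ nec))
      (pow_ne_zero _ (mul_ne_zero (mul_ne_zero u1 u2) u3))) (pow_ne_zero _ (mul_ne_zero (mul_ne_zero u4 u5) u6))
  have q1 : Ideal.Quotient.mk D.I (TT D i j k * LL D i' j' k') = ee i j k * W := by
    simp only [TT, LL, map_mul, red_l, red_r D h1, red_r D h2, red_r D h3, ee, hW, Int.cast_mul]; ring
  have q2 : Ideal.Quotient.mk D.I (TT D i' j' k' * LL D i j k) = ee i' j' k' * W := by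
    simp only [TT, LL, map_mul, red_l, red_r D h1', red_r D h2', red_r D h3', ee, hW, Int.cast_mul]; ring
  have hcon : ∀ z : 𝓞 L ⧸ D.I, z = W → z = -W → False := by
    intro z a b
    have : 2 * W = 0 := by rw [two_mul]; nth_rewrite 1 [← a]; rw [b]; ring
    exact mul_ne_zero ne2 W0 this
  rcases sq_eq_sq_iff_eq_or_eq_neg.mp hsq with h | h <;>
    (have h' := congrArg (Ideal.Quotient.mk D.I) h
     try rw [map_neg] at h'
     rw [q1, q2] at h'
     rcases ee_or h1 h2 h3 with a | a <;> rcases ee_or h1' h2' h3' with b | b <;>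
       rw [a, b] at h' ⊢ <;> rw [h] <;> push_cast at h' ⊢)
  all_goals first
    | ring1
    | exact (hcon W rfl (by linear_combination h')).elim
    | exact (hcon W rfl (by linear_combination -h')).elim

end mor

section dbl
variable {L : Type*} [Field L] [NumberField L]

lemma uniq (D : Lab L) {I : Ideal (𝓞 L)} [I.IsMaximal] [CharP (𝓞 L ⧸ I) 197] {i j : P}
    (hi : Ideal.Quotient.mk I (D.ι i) = 59) (hj : Ideal.Quotient.mk I (D.ι j) = 59) : i = j := by
  by_contra hij
  obtain ⟨s1, h1⟩ := Multiset.exists_cons_of_mem (D.mem i)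
  have hm : D.ι j ∈ s1 := by
    have := D.mem j
    rw [h1, Multiset.mem_cons] at this
    rcases this with h | h
    · exact absurd (D.inj h).symm hij
    · exact h
  obtain ⟨s2, h2⟩ := Multiset.exists_cons_of_mem hm
  have h := D.hs
  rw [h1, h2, Multiset.map_cons, Multiset.map_cons, Multiset.prod_cons, Multiset.prod_cons] at h
  have h' := congrArg (Polynomial.map (Ideal.Quotient.mk I)) h
  rw [Polynomial.map_map, Polynomial.map_mul, Polynomial.map_mul] at h'
  simp only [Polynomial.map_sub, map_X, map_C, hi, hj] at h'
  have e : (Ideal.Quotient.mk I).comp (Int.castRingHom (𝓞 L)) = Int.castRingHom _ := by ext; simp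
  rw [e] at h'
  have hd := congrArg (fun p => (derivative p).eval (59 : 𝓞 L ⧸ I)) h'
  simp only [derivative_map, derivative_mul, derivative_sub, derivative_X, derivative_C, eval_add, eval_mul, eval_sub, eval_X, eval_C, sub_self, zero_mul, mul_zero, add_zero] at hd
  have e2 := (dev_eq qs 59).2
  have e3 : (Int.castRingHom (𝓞 L ⧸ I)) ((derivative qR).eval 59) = 0 := by
    rw [← hd, ← eval_map_apply]
    simp
  have e4 : (((dev qs 59).2 : ℤ) : 𝓞 L ⧸ I) = 0 := by
    rw [e2]; exact e3
  rw [CharP.intCast_eq_zero_iff (𝓞 L ⧸ I) 197] at e4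
  exact chk197a (Int.emod_eq_zero_of_dvd (by exact_mod_cast e4))

end dbl
end PGLnt
namespace PGLnt
open Polynomial PGLid PGLcore PGLsp NumberField

attribute [local instance] Ideal.Quotient.field

section fin
variable {L : Type*} [Field L] [NumberField L]

noncomputable def ka (D : Lab L) (i j k : P) : L := (TT D i j k : L) / (LL D i j k : L)

lemma coe_ne {x : 𝓞 L} (h : x ≠ 0) : (x : L) ≠ 0 := by
  intro h'
  exact h (RingOfIntegers.coe_injective (h'.trans (map_zero _).symm))

lemma ka_cross (D : Lab L) {i j k i' j' k' : P} (h1 : i ≠ j) (h2 : j ≠ k) (h3 : k ≠ i)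
    (h1' : i' ≠ j') (h2' : j' ≠ k') (h3' : k' ≠ i') :
    (ee i' j' k' : L) * ka D i j k = ee i j k * ka D i' j' k' := by
  have h := congrArg (algebraMap (𝓞 L) L) (cross D h1 h2 h3 h1' h2' h3')
  have a := coe_ne (LL_ne D i j k)
  have b := coe_ne (LL_ne D i' j' k')
  simp only [map_mul, map_intCast] at h
  unfold ka
  field_simp
  linear_combination h

lemma ka_sq (D : Lab L) {i j k : P} (h1 : i ≠ j) (h2 : j ≠ k) (h3 : k ≠ i) :
    29 ^ 3 * ka D i j k ^ 2 = 1 := by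
  have h := congrArg (algebraMap (𝓞 L) L) (TL D h1 h2 h3)
  have a := coe_ne (LL_ne D i j k)
  simp only [map_mul, map_pow, map_ofNat] at h
  unfold ka
  field_simp
  exact h

lemma ka_map (D : Lab L) (g : Gal(L/ℚ)) (σ : P → P) (hσ : ∀ i, D.ι (σ i) = g • D.ι i) (i j k : P) :
    g (ka D i j k) = ka D (σ i) (σ j) (σ k) := by
  have hr : ∀ i j, g • rZ D i j = rZ D (σ i) (σ j) := by
    intro i j
    have := map_r (MulSemiringAction.toRingHom Gal(L/ℚ) (𝓞 L) g) (D.ι i) (D.ι j)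
    unfold rZ
    rw [hσ, hσ]
    exact this
  have hl : ∀ i, g • lZ D i = lZ D (σ i) := by
    intro i
    have := map_l (MulSemiringAction.toRingHom Gal(L/ℚ) (𝓞 L) g) lc (D.ι i)
    unfold lZ
    rw [hσ]
    exact this
  have hT : g • TT D i j k = TT D (σ i) (σ j) (σ k) := by
    unfold TT; rw [smul_mul', smul_mul', hr, hr, hr]
  have hL : g • LL D i j k = LL D (σ i) (σ j) (σ k) := by
    unfold LL; rw [smul_mul', smul_mul', hl, hl, hl]
  unfold ka
  rw [map_div₀, ← hT, ← hL]
  rfl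

lemma not_sq (κ : ℚ) (h : 29 ^ 3 * κ ^ 2 = 1) : False := by
  have : IsSquare ((29 : ℕ) : ℚ) := ⟨29 ^ 2 * κ, by push_cast; linear_combination -29 * h⟩
  rw [Rat.isSquare_natCast_iff] at this
  exact (by norm_num : Nat.Prime 29).prime.irreducible.not_isSquare this

theorem main_nt [IsGalois ℚ L] (hs : (Q.map (algebraMap ℚ L)).Splits)
    (hgen : ∀ g : Gal(L/ℚ), (∀ x : L, (Q.map (algebraMap ℚ L)).eval x = 0 → g x = x) → g = 1) :
    Nonempty (Gal(L/ℚ) ≃* GL (Fin 2) (ZMod 29) ⧸ Subgroup.center (GL (Fin 2) (ZMod 29))) := by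
  obtain ⟨D⟩ := exists_lab hs
  have hF : ∀ (g : Gal(L/ℚ)) (i : P), ∃ j, D.ι j = g • D.ι i := by
    intro g i
    apply D.surj
    have := map_l (MulSemiringAction.toRingHom Gal(L/ℚ) (𝓞 L) g) qs (D.ι i)
    rw [D.hι, map_zero] at this
    exact this.symm
  choose F hF using hF
  let φ0 : Gal(L/ℚ) →* Function.End P :=
    { toFun := F
      map_one' := by
        funext i; apply D.inj; rw [hF, one_smul]; rfl
      map_mul' := by
        intro g h
        funext i; apply D.inj
        rw [hF, mul_smul, ← hF, ← hF]; rfl }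
  let φ : Gal(L/ℚ) →* Equiv.Perm P := φ0.toHomPerm
  have hφ : ∀ g i, D.ι (φ g i) = g • D.ι i := fun g i => hF g i
  refine PGLcore.main φ ?_ ?_ ?_ ?_ ?_
  · rw [injective_iff_map_eq_one]
    intro g hg
    apply hgen
    intro x hx
    have hx2 : IsIntegral ℤ x := by
      refine ⟨qR, qR_monic, ?_⟩
      rw [Q_eq, Polynomial.map_map, eval_map] at hx
      rw [← hx]; congr 1
      exact RingHom.ext_int _ _
    obtain ⟨y, rfl⟩ : ∃ y : 𝓞 L, algebraMap (𝓞 L) L y = x := ⟨⟨x, hx2⟩, rfl⟩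
    have hy : ev (cz (𝓞 L) qs) y = 0 := by
      apply RingOfIntegers.coe_injective
      rw [map_l, map_zero, ← eval_map_qR, ← hx, Q_eq, Polynomial.map_map]
      congr 2
      exact RingHom.ext_int _ _
    obtain ⟨i, rfl⟩ := D.surj y hy
    have := hφ g i
    rw [hg] at this
    exact (congrArg (algebraMap (𝓞 L) L) this).symm
  all_goals
    have key : ∀ (g : Gal(L/ℚ)) (δ : ℤ) (i j k : P), i ≠ j → j ≠ k → k ≠ i →
        g (ka D i j k) = δ * ka D i j k → Good (φ g) δ := by
      intro g δ i j k h1 h2 h3 hδ a b c e1 e2 e3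
      have hn : ∀ {x y : P}, x ≠ y → φ g x ≠ φ g y := fun h => (φ g).injective.ne h
      have A := ka_cross D e1 e2 e3 h1 h2 h3
      have B := ka_cross D (hn e1) (hn e2) (hn e3) h1 h2 h3
      have C := congrArg g A
      rw [map_mul, map_mul, map_intCast, map_intCast, hδ, ka_map D g (φ g) (hφ g), B] at C
      have nz : ka D i j k ≠ 0 := by
        intro h0
        have := ka_sq D h1 h2 h3
        rw [h0] at this
        norm_num at this
      have : (ee (φ g a) (φ g b) (φ g c) : L) = δ * ee a b c := by
        apply mul_right_cancel₀ nz
        rw [C]; ring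
      exact_mod_cast this
    have key2 : ∀ (g : Gal(L/ℚ)) (i j k : P), i ≠ j → j ≠ k → k ≠ i →
        g (ka D i j k) = ka D i j k ∨ g (ka D i j k) = - ka D i j k := by
      intro g i j k h1 h2 h3
      have h := ka_sq D h1 h2 h3
      have h' := congrArg g h
      simp only [map_mul, map_pow, map_ofNat, map_one] at h'
      apply sq_eq_sq_iff_eq_or_eq_neg.mp
      apply mul_left_cancel₀ (show (29 : L) ^ 3 ≠ 0 by norm_num)
      rw [h, h']
    have n1 : (OnePoint.infty : P) ≠ ((0 : K) : P) := by simp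
    have n2 : ((0 : K) : P) ≠ ((1 : K) : P) := by simp
    have n3 : ((1 : K) : P) ≠ (OnePoint.infty : P) := by simp
  · intro g
    rcases key2 g _ _ _ n1 n2 n3 with h | h
    · exact ⟨1, key g 1 _ _ _ n1 n2 n3 (by rw [h]; simp)⟩
    · exact ⟨-1, key g (-1) _ _ _ n1 n2 n3 (by rw [h]; simp)⟩
  · by_contra! hc
    have hfix : ∀ g : Gal(L/ℚ), g (ka D OnePoint.infty ((0 : K) : P) ((1 : K) : P)) = ka D OnePoint.infty ((0 : K) : P) ((1 : K) : P) := by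
      intro g
      rcases key2 g _ _ _ n1 n2 n3 with h | h
      · exact h
      · exact absurd (key g (-1) _ _ _ n1 n2 n3 (by rw [h]; simp)) (hc g)
    obtain ⟨κ, hκ⟩ := IntermediateField.mem_bot.mp ((IsGalois.mem_bot_iff_fixed _).mpr hfix)
    have h := ka_sq D n1 n2 n3
    rw [← hκ] at h
    apply not_sq κ
    apply (algebraMap ℚ L).injective
    simpa using h
  · have hp : Nat.Prime 197 := by norm_num
    have := Fact.mk hp
    obtain ⟨I, hI, hI2⟩ := exists_prime (L := L) 197 hp
    have hch := charP_quot hp hI2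
    have : Finite (𝓞 L ⧸ I) := I.finiteQuotientOfFreeOfNeBot (I.bot_lt_of_maximal (RingOfIntegers.not_isField L)).ne'
    obtain ⟨σ, hσ⟩ := IsArithFrobAt.exists_of_isInvariant ℤ Gal(L/ℚ) I
    have hσ' : ∀ x : 𝓞 L, Ideal.Quotient.mk I (σ • x) = (Ideal.Quotient.mk I x) ^ 197 := by
      intro x
      have := hσ.mk_apply x
      rw [hI2, Int.card_ideal_quot] at this
      exact this
    have h59 : ev (cz (𝓞 L ⧸ I) qs) 59 = 0 := by
      have h := map_ev (Int.castRingHom (𝓞 L ⧸ I)) qs 59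
      have e : (Int.castRingHom (𝓞 L ⧸ I)) (ev qs 59) = 0 := by
        rw [eq_intCast, CharP.intCast_eq_zero_iff (𝓞 L ⧸ I) 197]
        exact_mod_cast Int.dvd_of_emod_eq_zero chk197b
      rw [e] at h
      rw [h, map_ofNat]; rfl
    rw [ev_prod D.hs (Ideal.Quotient.mk I), Multiset.prod_eq_zero_iff, Multiset.mem_map] at h59
    obtain ⟨r, hr, e⟩ := h59
    have hr0 : ev (cz (𝓞 L) qs) r = 0 := by
      rw [ev_prod D.hs (RingHom.id _) r, Multiset.prod_eq_zero_iff, Multiset.mem_map]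
      exact ⟨r, hr, by simp⟩
    obtain ⟨i, rfl⟩ := D.surj r hr0
    have hi : Ideal.Quotient.mk I (D.ι i) = 59 := (sub_eq_zero.mp e).symm
    refine ⟨σ, i, fun k => ⟨fun hk => ?_, ?_⟩⟩
    · apply uniq D (I := I) ?_ hi
      have h1 := hσ' (D.ι k)
      rw [← hφ, hk] at h1
      obtain ⟨n, hn, e⟩ := pow_char_nat 197 _ h1.symm
      have h2 := map_l (Ideal.Quotient.mk I) qs (D.ι k)
      rw [D.hι, map_zero, e] at h2
      have h := map_ev (Int.castRingHom (𝓞 L ⧸ I)) qs (n : ℤ)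
      rw [map_natCast] at h
      have h3 : (Int.castRingHom (𝓞 L ⧸ I)) (ev qs (n : ℤ)) = 0 := h.trans h2.symm
      rw [eq_intCast, CharP.intCast_eq_zero_iff (𝓞 L ⧸ I) 197] at h3
      have h4 := List.all_eq_true.mp chk197c n (List.mem_range.mpr hn)
      have h5 : ev qs (Int.ofNat n) % 197 = 0 := Int.emod_eq_zero_of_dvd (by exact_mod_cast h3)
      rw [h5] at h4
      have : n = 59 := by simpa using h4
      rw [e, this]; norm_num
    · rintro rfl
      apply uniq D (I := I) ?_ hi
      rw [hφ, hσ', hi]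
      exact map_ofNat (frobenius (𝓞 L ⧸ I) 197) 59
  · intro i
    by_contra! hc
    have : ∀ g : Gal(L/ℚ), g • D.ι i = D.ι i := fun g => by rw [← hφ, hc]
    obtain ⟨n, hn⟩ := Algebra.IsInvariant.isInvariant (A := ℤ) (G := Gal(L/ℚ)) (D.ι i) this
    have h := D.hι i
    rw [← hn] at h
    have h2 := map_ev (algebraMap ℤ (𝓞 L)) qs n
    have e : qs.map (algebraMap ℤ (𝓞 L)) = cz (𝓞 L) qs := rfl
    rw [e, h] at h2
    refine no_int_root n ?_
    have : ((ev qs n : ℤ) : 𝓞 L) = 0 := by simpa using h2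
    exact_mod_cast this

end fin
end PGLnt

theorem PGLnt.wrap {L : Type*} [Field L] [hc : CharZero L] (A : Algebra ℚ L) [hf : FiniteDimensional ℚ L]
    [hg : IsGalois ℚ L] (hs : (Q.map (algebraMap ℚ L)).Splits)
    (hgen : ∀ g : Gal(L/ℚ), (∀ x : L, (Q.map (algebraMap ℚ L)).eval x = 0 → g x = x) → g = 1) :
    Nonempty (Gal(L/ℚ) ≃* GL (Fin 2) (ZMod 29) ⧸ Subgroup.center (GL (Fin 2) (ZMod 29))) := by
  obtain rfl : A = DivisionRing.toRatAlgebra := Subsingleton.elim _ _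
  have : NumberField L := { }
  exact PGLnt.main_nt hs hgen


theorem PGLnt.facts {F : Type*} [Field F] [CharZero F] (p : F[X]) :
    CharZero p.SplittingField ∧ FiniteDimensional F p.SplittingField ∧ IsGalois F p.SplittingField ∧
    (p.map (algebraMap F p.SplittingField)).Splits ∧
    (∀ g : Gal(p.SplittingField/F), (∀ x : p.SplittingField,
      (p.map (algebraMap F p.SplittingField)).eval x = 0 → g x = x) → g = 1) := by
  refine ⟨charZero_of_injective_algebraMap (algebraMap F _).injective, inferInstance, IsGalois.mk,
    SplittingField.splits p, ?_⟩
  intro g hg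
  refine Polynomial.Gal.ext p (fun x hx => ?_)
  have h0 := (mem_rootSet.mp hx).2
  rw [aeval_def, ← eval_map] at h0
  exact hg x h0

theorem galoisGroup_Q :
    Nonempty (Q.Gal ≃*
      GL (Fin 2) (ZMod 29) ⧸ Subgroup.center (GL (Fin 2) (ZMod 29))) := by
  obtain ⟨hc, hf, hg, hs, hgen⟩ := PGLnt.facts Q
  exact @PGLnt.wrap Q.SplittingField _ hc _ hf hg hs hgen
end
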